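/- arXiv:1905.04758 — 14 statements merged into one kernel-verified Lean document; each statement's English description precedes it below -/
import Mathlib

section
/- Let m ≥ 1 be a natural number and suppose E[A^m] < 1. Then E[X^i] < ∞ for every i ≤ m, and E[X^m] = (∑_{i=0}^{m-1} C(m,i) · E[A^i] · E[X^i]) / (1 − E[A^m]), where C(m,i) is the binomial coefficient. -/
open MeasureTheory ProbabilityTheory ENNReal

theorem expand_aux {Ω : Type*} [MeasurableSpace Ω] {P : Measure Ω} [IsProbabilityMeasure P]
    {A Y : Ω → ℕ} (hA : Measurable A) (hY : Measurable Y)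
    (hAY : IndepFun A Y P) (m : ℕ) :
    ∫⁻ ω, ((A ω * Y ω + 1 : ℕ) : ℝ≥0∞) ^ m ∂P =
      (∑ i ∈ Finset.range m,
        (m.choose i : ℝ≥0∞) * (∫⁻ ω, (A ω : ℝ≥0∞) ^ i ∂P) * (∫⁻ ω, (Y ω : ℝ≥0∞) ^ i ∂P)) +
      (∫⁻ ω, (A ω : ℝ≥0∞) ^ m ∂P) * (∫⁻ ω, (Y ω : ℝ≥0∞) ^ m ∂P) := by
  have hc : ∀ i : ℕ, Measurable (fun n : ℕ => (n : ℝ≥0∞) ^ i) := fun i => measurable_from_top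
  have hprod : ∀ i : ℕ, ∫⁻ ω, (A ω : ℝ≥0∞) ^ i * (Y ω : ℝ≥0∞) ^ i ∂P =
      (∫⁻ ω, (A ω : ℝ≥0∞) ^ i ∂P) * (∫⁻ ω, (Y ω : ℝ≥0∞) ^ i ∂P) := fun i =>
    lintegral_mul_eq_lintegral_mul_lintegral_of_indepFun ((hc i).comp hA) ((hc i).comp hY)
      (hAY.comp (hc i) (hc i))
  have h1 : ∀ ω, ((A ω * Y ω + 1 : ℕ) : ℝ≥0∞) ^ m =
      ∑ i ∈ Finset.range (m + 1), (m.choose i : ℝ≥0∞) * ((A ω : ℝ≥0∞) ^ i * (Y ω : ℝ≥0∞) ^ i) := by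
    intro ω
    push_cast
    rw [add_pow]
    refine Finset.sum_congr rfl fun i _ => ?_
    rw [mul_pow, one_pow, mul_one, mul_comm]
  have hm2 : ∀ i : ℕ, Measurable (fun ω => (A ω : ℝ≥0∞) ^ i * (Y ω : ℝ≥0∞) ^ i) := fun i =>
    ((hc i).comp hA).mul ((hc i).comp hY)
  simp_rw [h1]
  rw [lintegral_finsetSum _ (fun i _ => (hm2 i).const_mul _), Finset.sum_range_succ]
  simp_rw [lintegral_const_mul _ (hm2 _), hprod]
  simp [mul_assoc]

theorem fin_aux {Ω : Type*} [MeasurableSpace Ω] {P : Measure Ω} [IsProbabilityMeasure P]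
    {A X : Ω → ℕ} (hA : Measurable A) (hX : Measurable X)
    (hAX : IndepFun A X P)
    (hfix : Measure.map X P = Measure.map (fun ω => A ω * X ω + 1) P)
    (m : ℕ) (hAm : ∀ i, 1 ≤ i → i ≤ m → ∫⁻ ω, (A ω : ℝ≥0∞) ^ i ∂P < 1) :
    ∀ i ≤ m, ∫⁻ ω, (X ω : ℝ≥0∞) ^ i ∂P < ⊤ := by
  intro i
  induction i using Nat.strong_induction_on with
  | _ i ih =>
  intro him
  rcases Nat.eq_zero_or_pos i with rfl | hi
  · simp
  have ha := hAm i hi him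
  set a := ∫⁻ ω, (A ω : ℝ≥0∞) ^ i ∂P with ha_def
  set S := ∑ j ∈ Finset.range i,
        (i.choose j : ℝ≥0∞) * (∫⁻ ω, (A ω : ℝ≥0∞) ^ j ∂P) * (∫⁻ ω, (X ω : ℝ≥0∞) ^ j ∂P) with hS
  have hSfin : S < ⊤ := by
    refine ENNReal.sum_lt_top.2 fun j hj => ?_
    have hj := Finset.mem_range.1 hj
    refine ENNReal.mul_lt_top (ENNReal.mul_lt_top (by simp) ?_) (ih j hj (by omega))
    rcases Nat.eq_zero_or_pos j with rfl | hj0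
    · simp
    · exact (hAm j hj0 (by omega)).trans (by simp)
  have hbound : ∀ K : ℕ, ∫⁻ ω, ((min (X ω) K : ℕ) : ℝ≥0∞) ^ i ∂P ≤ S / (1 - a) := by
    intro K
    have hg : Measurable (fun n : ℕ => ((min n K : ℕ) : ℝ≥0∞) ^ i) := measurable_from_top
    have hminm : Measurable (fun n : ℕ => min n K) := measurable_from_top
    have hAX1 : Measurable (fun ω => A ω * X ω + 1) := (hA.mul hX).add_const 1
    have e1 : ∫⁻ ω, ((min (X ω) K : ℕ) : ℝ≥0∞) ^ i ∂P =
        ∫⁻ ω, ((min (A ω * X ω + 1) K : ℕ) : ℝ≥0∞) ^ i ∂P := by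
      rw [← lintegral_map hg hX, hfix, lintegral_map hg hAX1]
    have e2 : ∫⁻ ω, ((min (A ω * X ω + 1) K : ℕ) : ℝ≥0∞) ^ i ∂P ≤
        ∫⁻ ω, ((A ω * (min (X ω) K) + 1 : ℕ) : ℝ≥0∞) ^ i ∂P := by
      refine lintegral_mono fun ω => ?_
      have : min (A ω * X ω + 1) K ≤ A ω * (min (X ω) K) + 1 := by
        rcases Nat.eq_zero_or_pos (A ω) with h | h
        · simp [h]
        · rcases le_total (X ω) K with h' | h'
          · rw [min_eq_left h']; exact min_le_left _ _
          · rw [min_eq_right h']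
            refine (min_le_right _ _).trans ?_
            nlinarith
      exact pow_le_pow_left' (by exact_mod_cast this) i
    have e3 := expand_aux hA (hminm.comp hX) (hAX.comp measurable_id hminm) i
    simp only [Function.comp] at e3
    have e4 : ∑ j ∈ Finset.range i, (i.choose j : ℝ≥0∞) * (∫⁻ ω, (A ω : ℝ≥0∞) ^ j ∂P) *
        (∫⁻ ω, ((min (X ω) K : ℕ) : ℝ≥0∞) ^ j ∂P) ≤ S := by
      refine Finset.sum_le_sum fun j _ => ?_
      refine mul_le_mul_right (lintegral_mono fun ω => ?_) _
      exact pow_le_pow_left' (by exact_mod_cast min_le_left _ _) j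
    have hfinK : ∫⁻ ω, ((min (X ω) K : ℕ) : ℝ≥0∞) ^ i ∂P < ⊤ := by
      calc _ ≤ ∫⁻ ω, (K : ℝ≥0∞) ^ i ∂P := lintegral_mono fun ω =>
              pow_le_pow_left' (by exact_mod_cast min_le_right _ _) i
        _ < ⊤ := by simp
    set y := ∫⁻ ω, ((min (X ω) K : ℕ) : ℝ≥0∞) ^ i ∂P with hy
    have e5 : y ≤ S + a * y :=
      e1.le.trans (e2.trans (e3.le.trans (add_le_add_left e4 _)))
    have hne : 1 - a ≠ 0 := (tsub_pos_of_lt ha).ne'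
    rw [ENNReal.le_div_iff_mul_le (Or.inl hne) (Or.inl (by simp)),
      ENNReal.mul_sub (fun _ _ => hfinK.ne), mul_one, mul_comm y a]
    exact tsub_le_iff_right.2 e5
  have hsup : ∫⁻ ω, (X ω : ℝ≥0∞) ^ i ∂P = ⨆ K : ℕ, ∫⁻ ω, ((min (X ω) K : ℕ) : ℝ≥0∞) ^ i ∂P := by
    rw [← lintegral_iSup]
    · refine lintegral_congr fun ω => le_antisymm ?_ ?_
      · refine le_iSup_of_le (X ω) ?_
        simp
      · exact iSup_le fun K => pow_le_pow_left' (by exact_mod_cast min_le_left _ _) i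
    · intro K
      exact (measurable_from_top (f := fun n : ℕ => ((min n K : ℕ) : ℝ≥0∞) ^ i)).comp hX
    · intro K L hKL ω
      exact pow_le_pow_left' (by exact_mod_cast min_le_min_left _ hKL) i
  rw [hsup]
  refine (iSup_le hbound).trans_lt ?_
  exact ENNReal.div_lt_top hSfin.ne (tsub_pos_of_lt ha).ne'

theorem stmt_0 {Ω : Type*} [MeasurableSpace Ω] {P : Measure Ω} [IsProbabilityMeasure P]
    {A X : Ω → ℕ} (hA : Measurable A) (hX : Measurable X)
    (hAX : IndepFun A X P)
    (h0 : 0 < P {ω | A ω = 0})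
    (hfix : Measure.map X P = Measure.map (fun ω => A ω * X ω + 1) P)
    (m : ℕ) (hm : 1 ≤ m)
    (hAm : ∫⁻ ω, (A ω : ℝ≥0∞) ^ m ∂P < 1) :
    (∀ i ≤ m, ∫⁻ ω, (X ω : ℝ≥0∞) ^ i ∂P < ⊤) ∧
    ∫⁻ ω, (X ω : ℝ≥0∞) ^ m ∂P =
      (∑ i ∈ Finset.range m,
        (m.choose i : ℝ≥0∞) * (∫⁻ ω, (A ω : ℝ≥0∞) ^ i ∂P) * (∫⁻ ω, (X ω : ℝ≥0∞) ^ i ∂P)) /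
      (1 - ∫⁻ ω, (A ω : ℝ≥0∞) ^ m ∂P) := by
  have hAi : ∀ i, 1 ≤ i → i ≤ m → ∫⁻ ω, (A ω : ℝ≥0∞) ^ i ∂P < 1 := by
    intro i hi him
    refine (lintegral_mono fun ω => ?_).trans_lt hAm
    have : A ω ^ i ≤ A ω ^ m := by
      rcases Nat.eq_zero_or_pos (A ω) with h | h
      · rw [h, zero_pow (by omega)]; exact Nat.zero_le _
      · exact Nat.pow_le_pow_right h him
    show (A ω : ℝ≥0∞) ^ i ≤ (A ω : ℝ≥0∞) ^ m
    rw [← Nat.cast_pow, ← Nat.cast_pow]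
    exact Nat.cast_le.2 this
  have hfin := fin_aux hA hX hAX hfix m hAi
  refine ⟨hfin, ?_⟩
  have hAX1 : Measurable (fun ω => A ω * X ω + 1) := (hA.mul hX).add_const 1
  have hg : Measurable (fun n : ℕ => (n : ℝ≥0∞) ^ m) := measurable_from_top
  have e1 : ∫⁻ ω, (X ω : ℝ≥0∞) ^ m ∂P = ∫⁻ ω, ((A ω * X ω + 1 : ℕ) : ℝ≥0∞) ^ m ∂P := by
    rw [← lintegral_map hg hX, hfix, lintegral_map hg hAX1]
  have e2 := e1.trans (expand_aux hA hX hAX m)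
  have hx := hfin m le_rfl
  have hne : 1 - ∫⁻ ω, (A ω : ℝ≥0∞) ^ m ∂P ≠ 0 := (tsub_pos_of_lt hAm).ne'
  rw [ENNReal.eq_div_iff hne (by simp), mul_comm, ENNReal.mul_sub (fun _ _ => hx.ne), mul_one,
    mul_comm]
  exact ENNReal.sub_eq_of_eq_add (ENNReal.mul_lt_top (hAm.trans (by simp)) hx).ne e2
end

section
/- Let m ≥ 1 be a natural number. If E[A^m] ≥ 1, then E[X^m] = ∞. -/
open MeasureTheory ProbabilityTheory ENNReal

theorem stmt_1 {Ω : Type*} [MeasurableSpace Ω] {P : Measure Ω} [IsProbabilityMeasure P]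
    {A X : Ω → ℕ} (hA : Measurable A) (hX : Measurable X)
    (hAX : IndepFun A X P)
    (h0 : 0 < P {ω | A ω = 0})
    (hfix : Measure.map X P = Measure.map (fun ω => A ω * X ω + 1) P)
    (m : ℕ) (hm : 1 ≤ m)
    (hAm : 1 ≤ ∫⁻ ω, (A ω : ℝ≥0∞) ^ m ∂P) :
    ∫⁻ ω, (X ω : ℝ≥0∞) ^ m ∂P = ⊤ := by
  have hf : Measurable (fun n : ℕ => (n : ℝ≥0∞) ^ m) := measurable_from_nat
  have hB : Measurable (fun ω => A ω * X ω + 1) := (hA.mul hX).add_const 1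
  have e1 : ∫⁻ ω, (X ω : ℝ≥0∞) ^ m ∂P = ∫⁻ ω, ((A ω * X ω + 1 : ℕ) : ℝ≥0∞) ^ m ∂P := by
    rw [← lintegral_map hf hX, hfix, lintegral_map hf hB]
  have e2 : ∫⁻ ω, (A ω : ℝ≥0∞) ^ m * (X ω : ℝ≥0∞) ^ m ∂P
      = (∫⁻ ω, (A ω : ℝ≥0∞) ^ m ∂P) * ∫⁻ ω, (X ω : ℝ≥0∞) ^ m ∂P :=
    lintegral_mul_eq_lintegral_mul_lintegral_of_indepFun (hf.comp hA) (hf.comp hX)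
      (hAX.comp hf hf)
  have e3 : ∫⁻ ω, ((A ω : ℝ≥0∞) ^ m * (X ω : ℝ≥0∞) ^ m + 1) ∂P
      ≤ ∫⁻ ω, ((A ω * X ω + 1 : ℕ) : ℝ≥0∞) ^ m ∂P := by
    refine lintegral_mono fun ω => ?_
    have h : (A ω * X ω) ^ m + 1 ≤ (A ω * X ω + 1) ^ m :=
      Nat.pow_lt_pow_left (Nat.lt_succ_self _) (by omega)
    have h' : (((A ω * X ω) ^ m + 1 : ℕ) : ℝ≥0∞) ≤ ((A ω * X ω + 1) ^ m : ℕ) := by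
      exact_mod_cast h
    simp only [← mul_pow]
    push_cast at h' ⊢
    exact h'
  rw [lintegral_add_right _ measurable_const, e2, ← e1] at e3
  simp only [lintegral_const, measure_univ, mul_one] at e3
  by_contra hne
  have h4 : (∫⁻ ω, (X ω : ℝ≥0∞) ^ m ∂P) + 1 ≤ ∫⁻ ω, (X ω : ℝ≥0∞) ^ m ∂P :=
    (add_le_add_left (le_mul_of_one_le_left (zero_le) hAm) 1).trans e3
  exact absurd h4 (not_le.mpr (ENNReal.lt_add_right hne one_ne_zero))
end

section
/- E[X] < ∞ if and only if E[A] < 1, and in that case E[X] = 1 / (1 − E[A]). -/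
open MeasureTheory ProbabilityTheory ENNReal

theorem stmt_2 {Ω : Type*} [MeasurableSpace Ω] {P : Measure Ω} [IsProbabilityMeasure P]
    {A X : Ω → ℕ} (hA : Measurable A) (hX : Measurable X)
    (hAX : IndepFun A X P)
    (h0 : 0 < P {ω | A ω = 0})
    (hfix : Measure.map X P = Measure.map (fun ω => A ω * X ω + 1) P) :
    ((∫⁻ ω, (X ω : ℝ≥0∞) ∂P) < ⊤ ↔ (∫⁻ ω, (A ω : ℝ≥0∞) ∂P) < 1) ∧
    ((∫⁻ ω, (A ω : ℝ≥0∞) ∂P) < 1 →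
      ∫⁻ ω, (X ω : ℝ≥0∞) ∂P = 1 / (1 - ∫⁻ ω, (A ω : ℝ≥0∞) ∂P)) := by
  have hm : ∀ f : ℕ → ℝ≥0∞, Measurable f := fun f => measurable_of_countable f
  have hY : Measurable (fun ω => A ω * X ω + 1) := (hA.mul hX).add measurable_const
  have key : ∀ f : ℕ → ℝ≥0∞, ∫⁻ ω, f (X ω) ∂P = ∫⁻ ω, f (A ω * X ω + 1) ∂P := by
    intro f
    rw [← lintegral_map (hm f) hX, hfix, lintegral_map (hm f) hY]
  have ind : ∀ f : ℕ → ℝ≥0∞, ∫⁻ ω, ((A ω : ℝ≥0∞) * f (X ω) + 1) ∂P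
      = (∫⁻ ω, (A ω : ℝ≥0∞) ∂P) * (∫⁻ ω, f (X ω) ∂P) + 1 := by
    intro f
    have h1 : Measurable (fun ω => (A ω : ℝ≥0∞)) := (hm (fun n => (n : ℝ≥0∞))).comp hA
    have h2 : Measurable (fun ω => f (X ω)) := (hm f).comp hX
    have h3 : IndepFun (fun ω => (A ω : ℝ≥0∞)) (fun ω => f (X ω)) P :=
      hAX.comp (hm (fun n => (n : ℝ≥0∞))) (hm f)
    have h4 := lintegral_mul_eq_lintegral_mul_lintegral_of_indepFun h1 h2 h3
    simp only [Pi.mul_apply] at h4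
    rw [lintegral_add_right _ measurable_const, h4]
    simp
  have hEX : ∫⁻ ω, (X ω : ℝ≥0∞) ∂P
      = (∫⁻ ω, (A ω : ℝ≥0∞) ∂P) * (∫⁻ ω, (X ω : ℝ≥0∞) ∂P) + 1 := by
    rw [← ind (fun n => (n : ℝ≥0∞)), key (fun n => (n : ℝ≥0∞))]
    simp
  have htr : ∀ n : ℕ, ∫⁻ ω, ((min (X ω) n : ℕ) : ℝ≥0∞) ∂P
      ≤ (∫⁻ ω, (A ω : ℝ≥0∞) ∂P) * (∫⁻ ω, ((min (X ω) n : ℕ) : ℝ≥0∞) ∂P) + 1 := by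
    intro n
    rw [← ind (fun k => ((min k n : ℕ) : ℝ≥0∞)), key (fun k => ((min k n : ℕ) : ℝ≥0∞))]
    refine lintegral_mono fun ω => ?_
    have : min (A ω * X ω + 1) n ≤ A ω * min (X ω) n + 1 := by
      rcases Nat.eq_zero_or_pos (A ω) with h | h
      · simp [h]
      · rcases le_total (X ω) n with h' | h'
        · rw [min_eq_left h']; exact min_le_left _ _
        · rw [min_eq_right h']
          exact (min_le_right _ _).trans (by nlinarith)
    show ((min (A ω * X ω + 1) n : ℕ) : ℝ≥0∞) ≤ (A ω : ℝ≥0∞) * ((min (X ω) n : ℕ) : ℝ≥0∞) + 1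
    exact_mod_cast this
  have hsup : ∫⁻ ω, (X ω : ℝ≥0∞) ∂P = ⨆ n : ℕ, ∫⁻ ω, ((min (X ω) n : ℕ) : ℝ≥0∞) ∂P := by
    rw [← lintegral_iSup]
    · refine lintegral_congr fun ω => le_antisymm ?_ ?_
      · exact le_iSup_of_le (X ω) (by simp)
      · exact iSup_le fun n => by exact_mod_cast min_le_left _ _
    · exact fun n => (hm (fun k => ((min k n : ℕ) : ℝ≥0∞))).comp hX
    · intro i j hij ω
      show ((min (X ω) i : ℕ) : ℝ≥0∞) ≤ ((min (X ω) j : ℕ) : ℝ≥0∞)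
      exact_mod_cast min_le_min_left _ hij
  have hfinm : ∀ n : ℕ, ∫⁻ ω, ((min (X ω) n : ℕ) : ℝ≥0∞) ∂P ≠ ⊤ := by
    intro n
    have : ∫⁻ ω, ((min (X ω) n : ℕ) : ℝ≥0∞) ∂P ≤ ∫⁻ _, (n : ℝ≥0∞) ∂P :=
      lintegral_mono fun ω => by
        show ((min (X ω) n : ℕ) : ℝ≥0∞) ≤ (n : ℝ≥0∞)
        exact_mod_cast min_le_right _ _
    refine ne_top_of_le_ne_top ?_ this
    simp
  generalize (∫⁻ ω, (A ω : ℝ≥0∞) ∂P) = a at *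
  generalize (∫⁻ ω, (X ω : ℝ≥0∞) ∂P) = x at *
  have hb : a < 1 → x ≤ 1 / (1 - a) := by
    intro ha
    rw [hsup]
    refine iSup_le fun n => ?_
    have h1 := htr n
    have h2 := hfinm n
    generalize (∫⁻ ω, ((min (X ω) n : ℕ) : ℝ≥0∞) ∂P) = m at *
    rw [ENNReal.le_div_iff_mul_le (Or.inl (tsub_pos_of_lt ha).ne') (Or.inr (by simp)),
      ENNReal.mul_sub (fun _ _ => h2), mul_one, mul_comm]
    exact tsub_le_iff_left.2 h1
  have hfin : a < 1 → x < ⊤ := fun ha =>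
    (hb ha).trans_lt (ENNReal.div_lt_top (by simp) (tsub_pos_of_lt ha).ne')
  refine ⟨⟨fun hx => ?_, hfin⟩, fun ha => ?_⟩
  · by_contra! h
    have h1 : x + 1 ≤ x := by
      calc x + 1 ≤ a * x + 1 := by gcongr; exact le_mul_of_one_le_left' h
        _ = x := hEX.symm
    exact absurd h1 (not_le.2 (ENNReal.lt_add_right hx.ne (by simp)))
  · have hx := (hfin ha).ne
    rw [ENNReal.eq_div_iff (tsub_pos_of_lt ha).ne' (by simp [ne_eq]), mul_comm,
      ENNReal.mul_sub (fun _ _ => hx), mul_one, mul_comm]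
    have hax : a * x ≠ ⊤ := ENNReal.mul_ne_top ha.ne_top hx
    exact ENNReal.sub_eq_of_eq_add hax (hEX.trans (add_comm _ _))
end

section
/- E[X²] < ∞ if and only if E[A²] < 1, and in that case E[A] < 1 also holds and E[X²] = (1 + 2·E[A]·E[X]) / (1 − E[A²]), where E[X] = 1/(1 − E[A]). -/
open MeasureTheory ProbabilityTheory ENNReal

lemma aux_le {m a c : ℝ≥0∞} (hm : m ≠ ⊤) (ha : a < 1) (h : m ≤ c + a * m) :
    m ≤ c / (1 - a) := by
  have h1 : 1 - a ≠ 0 := (tsub_pos_of_lt ha).ne'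
  have h2 : 1 - a ≠ ⊤ := (lt_of_le_of_lt tsub_le_self one_lt_top).ne
  rw [ENNReal.le_div_iff_mul_le (Or.inl h1) (Or.inl h2), ENNReal.mul_sub (fun _ _ => hm), mul_one,
    tsub_le_iff_right, mul_comm m a]
  exact h

lemma aux_eq {m a c : ℝ≥0∞} (hm : m ≠ ⊤) (ha : a < 1) (h : m = c + a * m) :
    m = c / (1 - a) := by
  have h1 : 1 - a ≠ 0 := (tsub_pos_of_lt ha).ne'
  have h2 : 1 - a ≠ ⊤ := (lt_of_le_of_lt tsub_le_self one_lt_top).ne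
  have h3 : a * m ≠ ⊤ := ENNReal.mul_ne_top (ha.trans one_lt_top).ne hm
  rw [ENNReal.eq_div_iff h1 h2, mul_comm, ENNReal.mul_sub (fun _ _ => hm), mul_one, mul_comm m a]
  exact ENNReal.sub_eq_of_eq_add h3 h

lemma aux_sup {Ω : Type*} [MeasurableSpace Ω] {P : Measure Ω} {X : Ω → ℕ} (hX : Measurable X)
    (k : ℕ) {C : ℝ≥0∞} (h : ∀ n : ℕ, ∫⁻ ω, ((min (X ω) n : ℕ) : ℝ≥0∞) ^ k ∂P ≤ C) :
    ∫⁻ ω, (X ω : ℝ≥0∞) ^ k ∂P ≤ C := by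
  refine le_of_tendsto' (lintegral_tendsto_of_tendsto_of_monotone
    (f := fun (n : ℕ) ω => ((min (X ω) n : ℕ) : ℝ≥0∞) ^ k) (fun n => ?_) ?_ ?_) h
  · exact ((measurable_from_top (f := fun x : ℕ => ((min x n : ℕ) : ℝ≥0∞) ^ k)).comp hX).aemeasurable
  · refine Filter.Eventually.of_forall fun ω n m hnm => ?_
    dsimp only
    gcongr
  · refine Filter.Eventually.of_forall fun ω => ?_
    refine tendsto_const_nhds.congr' ?_
    filter_upwards [Filter.eventually_ge_atTop (X ω)] with n hn
    rw [min_eq_left hn]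

lemma aux_min (a x n : ℕ) : min (a * x + 1) n ≤ a * min x n + 1 := by
  rcases Nat.eq_zero_or_pos a with rfl | ha
  · simp
  · rcases le_total x n with h | h
    · rw [min_eq_left h]; exact min_le_left _ _
    · rw [min_eq_right h]
      exact (min_le_right _ _).trans (by nlinarith)

theorem stmt_3 {Ω : Type*} [MeasurableSpace Ω] {P : Measure Ω} [IsProbabilityMeasure P]
    {A X : Ω → ℕ} (hA : Measurable A) (hX : Measurable X)
    (hAX : IndepFun A X P)
    (h0 : 0 < P {ω | A ω = 0})
    (hfix : Measure.map X P = Measure.map (fun ω => A ω * X ω + 1) P) :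
    ((∫⁻ ω, (X ω : ℝ≥0∞) ^ 2 ∂P) < ⊤ ↔ (∫⁻ ω, (A ω : ℝ≥0∞) ^ 2 ∂P) < 1) ∧
    ((∫⁻ ω, (A ω : ℝ≥0∞) ^ 2 ∂P) < 1 →
      (∫⁻ ω, (A ω : ℝ≥0∞) ∂P) < 1 ∧
      (∫⁻ ω, (X ω : ℝ≥0∞) ∂P) = 1 / (1 - ∫⁻ ω, (A ω : ℝ≥0∞) ∂P) ∧
      (∫⁻ ω, (X ω : ℝ≥0∞) ^ 2 ∂P) =
        (1 + 2 * (∫⁻ ω, (A ω : ℝ≥0∞) ∂P) * (∫⁻ ω, (X ω : ℝ≥0∞) ∂P)) /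
        (1 - ∫⁻ ω, (A ω : ℝ≥0∞) ^ 2 ∂P)) := by
  have mA : ∀ g : ℕ → ℝ≥0∞, Measurable fun ω => g (A ω) := fun g => measurable_from_top.comp hA
  have mX : ∀ g : ℕ → ℝ≥0∞, Measurable fun ω => g (X ω) := fun g => measurable_from_top.comp hX
  have hfx : ∀ g : ℕ → ℝ≥0∞, ∫⁻ ω, g (X ω) ∂P = ∫⁻ ω, g (A ω * X ω + 1) ∂P := by
    intro g
    have hm : Measurable (fun ω => A ω * X ω + 1) := (hA.mul hX).add_const 1
    rw [← lintegral_map (f := g) measurable_from_top hX, hfix,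
      lintegral_map (f := g) measurable_from_top hm]
  have hind : ∀ f g : ℕ → ℝ≥0∞, ∫⁻ ω, f (A ω) * g (X ω) ∂P
      = (∫⁻ ω, f (A ω) ∂P) * ∫⁻ ω, g (X ω) ∂P := by
    intro f g
    exact lintegral_mul_eq_lintegral_mul_lintegral_of_indepFun (mA f) (mX g)
      (hAX.comp (φ := f) (ψ := g) measurable_from_top measurable_from_top)
  -- expansions
  have e1 : ∀ g : ℕ → ℕ, ∫⁻ ω, ((A ω * g (X ω) + 1 : ℕ) : ℝ≥0∞) ∂P
      = 1 + (∫⁻ ω, (A ω : ℝ≥0∞) ∂P) * ∫⁻ ω, (g (X ω) : ℝ≥0∞) ∂P := by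
    intro g
    rw [← hind (fun a => (a : ℝ≥0∞)) (fun x => (g x : ℝ≥0∞))]
    push_cast
    rw [lintegral_add_right _ measurable_const]
    simp [add_comm]
  have e2 : ∀ g : ℕ → ℕ, ∫⁻ ω, ((A ω * g (X ω) + 1 : ℕ) : ℝ≥0∞) ^ 2 ∂P
      = (1 + 2 * (∫⁻ ω, (A ω : ℝ≥0∞) ∂P) * ∫⁻ ω, (g (X ω) : ℝ≥0∞) ∂P)
        + (∫⁻ ω, (A ω : ℝ≥0∞) ^ 2 ∂P) * ∫⁻ ω, (g (X ω) : ℝ≥0∞) ^ 2 ∂P := by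
    intro g
    rw [← hind (fun a => (a : ℝ≥0∞) ^ 2) (fun x => (g x : ℝ≥0∞) ^ 2), mul_assoc,
      ← hind (fun a => (a : ℝ≥0∞)) (fun x => (g x : ℝ≥0∞))]
    have m1 : Measurable fun ω => (A ω : ℝ≥0∞) * (g (X ω) : ℝ≥0∞) :=
      (mA fun a => (a : ℝ≥0∞)).mul (mX fun x => (g x : ℝ≥0∞))
    have : ∀ ω, ((A ω * g (X ω) + 1 : ℕ) : ℝ≥0∞) ^ 2
        = (1 + 2 * ((A ω : ℝ≥0∞) * (g (X ω) : ℝ≥0∞))) + (A ω : ℝ≥0∞) ^ 2 * (g (X ω) : ℝ≥0∞) ^ 2 := by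
      intro ω; push_cast; ring
    simp_rw [this]
    have m2 : Measurable fun ω => 1 + 2 * ((A ω : ℝ≥0∞) * (g (X ω) : ℝ≥0∞)) :=
      measurable_const.add (m1.const_mul 2)
    rw [lintegral_add_left m2,
      lintegral_add_left measurable_const, lintegral_const_mul _ m1]
    simp
  have E1 := (hfx fun x => (x : ℝ≥0∞)).trans (e1 id)
  have E2 := (hfx fun x => (x : ℝ≥0∞) ^ 2).trans (e2 id)
  simp only [id] at E1 E2
  have hfin : ∀ (n k : ℕ), ∫⁻ ω, ((min (X ω) n : ℕ) : ℝ≥0∞) ^ k ∂P ≠ ⊤ := by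
    intro n k
    refine ne_top_of_le_ne_top (b := (n : ℝ≥0∞) ^ k) (by finiteness) ?_
    calc _ ≤ ∫⁻ ω, (n : ℝ≥0∞) ^ k ∂P := by
          refine lintegral_mono fun ω => ?_
          dsimp only
          gcongr
          exact min_le_right _ _
      _ = _ := by simp
  have main : (∫⁻ ω, (A ω : ℝ≥0∞) ^ 2 ∂P) < 1 → (∫⁻ ω, (A ω : ℝ≥0∞) ∂P) < 1 ∧
      (∫⁻ ω, (X ω : ℝ≥0∞) ∂P) ≠ ⊤ ∧ (∫⁻ ω, (X ω : ℝ≥0∞) ^ 2 ∂P) ≠ ⊤ := by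
    intro h2
    have h1 : (∫⁻ ω, (A ω : ℝ≥0∞) ∂P) < 1 := by
      refine lt_of_le_of_lt (lintegral_mono fun ω => ?_) h2
      dsimp only
      exact_mod_cast Nat.le_self_pow two_ne_zero (A ω)
    have n1 : 1 - (∫⁻ ω, (A ω : ℝ≥0∞) ∂P) ≠ 0 := (tsub_pos_of_lt h1).ne'
    have n2 : 1 - (∫⁻ ω, (A ω : ℝ≥0∞) ^ 2 ∂P) ≠ 0 := (tsub_pos_of_lt h2).ne'
    have b1 : ∀ n : ℕ, ∫⁻ ω, ((min (X ω) n : ℕ) : ℝ≥0∞) ∂P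
        ≤ 1 / (1 - ∫⁻ ω, (A ω : ℝ≥0∞) ∂P) := by
      intro n
      refine aux_le (by simpa using hfin n 1) h1 ?_
      rw [← e1 (fun x => min x n), hfx fun x => ((min x n : ℕ) : ℝ≥0∞)]
      refine lintegral_mono fun ω => ?_
      exact Nat.cast_le.2 (aux_min _ _ _)
    have f1 : (∫⁻ ω, (X ω : ℝ≥0∞) ∂P) ≤ 1 / (1 - ∫⁻ ω, (A ω : ℝ≥0∞) ∂P) := by
      have := aux_sup (P := P) hX 1 (C := 1 / (1 - ∫⁻ ω, (A ω : ℝ≥0∞) ∂P))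
        (by simp only [pow_one]; exact b1)
      simpa only [pow_one] using this
    have g1 : (∫⁻ ω, (X ω : ℝ≥0∞) ∂P) ≠ ⊤ :=
      ne_top_of_le_ne_top (ENNReal.div_ne_top one_ne_top n1) f1
    refine ⟨h1, g1, ?_⟩
    have b2 : ∀ n : ℕ, ∫⁻ ω, ((min (X ω) n : ℕ) : ℝ≥0∞) ^ 2 ∂P
        ≤ (1 + 2 * (∫⁻ ω, (A ω : ℝ≥0∞) ∂P) * (∫⁻ ω, (X ω : ℝ≥0∞) ∂P))
          / (1 - ∫⁻ ω, (A ω : ℝ≥0∞) ^ 2 ∂P) := by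
      intro n
      refine aux_le (hfin n 2) h2 ?_
      have : ∫⁻ ω, ((min (X ω) n : ℕ) : ℝ≥0∞) ∂P ≤ ∫⁻ ω, (X ω : ℝ≥0∞) ∂P :=
        lintegral_mono fun ω => Nat.cast_le.2 (min_le_left _ _)
      refine le_trans ?_ (add_le_add_left (add_le_add_right (mul_le_mul_right this _) _) _)
      rw [← e2 (fun x => min x n), hfx fun x => ((min x n : ℕ) : ℝ≥0∞) ^ 2]
      refine lintegral_mono fun ω => ?_
      exact pow_le_pow_left' (Nat.cast_le.2 (aux_min _ _ _)) 2
    refine ne_top_of_le_ne_top (ENNReal.div_ne_top ?_ n2) (aux_sup hX 2 b2)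
    have := (h1.trans one_lt_top).ne
    finiteness
  refine ⟨⟨fun h => ?_, fun h => (main h).2.2.lt_top⟩, fun h => ?_⟩
  · by_contra! hc
    have : (∫⁻ ω, (X ω : ℝ≥0∞) ^ 2 ∂P) + 1 ≤ ∫⁻ ω, (X ω : ℝ≥0∞) ^ 2 ∂P := by
      conv_rhs => rw [E2]
      rw [add_comm]
      exact add_le_add le_self_add (le_mul_of_one_le_left' hc)
    exact absurd this (not_le.2 (ENNReal.lt_add_right h.ne one_ne_zero))
  · obtain ⟨h1, g1, g2⟩ := main h
    exact ⟨h1, aux_eq g1 h1 E1, aux_eq g2 h E2⟩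
end

section
/- Suppose A has the Poisson distribution with parameter λ > 0, i.e., ℙ[A = k] = e^{−λ} λ^k / k! for k ∈ ℕ. Then E[X] < ∞ if and only if λ < 1, and in that case E[X] = 1 / (1 − λ). -/
open MeasureTheory ProbabilityTheory ENNReal

theorem stmt_4 {Ω : Type*} [MeasurableSpace Ω] {P : Measure Ω} [IsProbabilityMeasure P]
    {A X : Ω → ℕ} (hA : Measurable A) (hX : Measurable X)
    (hAX : IndepFun A X P)
    (h0 : 0 < P {ω | A ω = 0})
    (hfix : Measure.map X P = Measure.map (fun ω => A ω * X ω + 1) P)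
    (lam : ℝ) (hlam : 0 < lam)
    (hpois : ∀ k : ℕ, P {ω | A ω = k} =
      ENNReal.ofReal (Real.exp (-lam) * lam ^ k / (Nat.factorial k))) :
    ((∫⁻ ω, (X ω : ℝ≥0∞) ∂P) < ⊤ ↔ lam < 1) ∧
    (lam < 1 → ∫⁻ ω, (X ω : ℝ≥0∞) ∂P = ENNReal.ofReal (1 / (1 - lam))) := by
  have hnat : ∀ f : ℕ → ℝ≥0∞, Measurable f := fun f => measurable_from_top
  have key : ∀ f : ℕ → ℝ≥0∞, ∫⁻ ω, f (A ω) ∂P = ∑' k, f k * P {ω | A ω = k} := by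
    intro f
    rw [← lintegral_map (hnat f) hA, lintegral_countable']
    refine tsum_congr fun k => ?_
    rw [Measure.map_apply hA (measurableSet_singleton k)]
    rfl
  have hone : ∑' k, P {ω | A ω = k} = 1 := by
    have := key (fun _ => 1)
    simpa using this.symm
  have hEA : ∫⁻ ω, (A ω : ℝ≥0∞) ∂P = ENNReal.ofReal lam := by
    rw [key (fun k => (k : ℝ≥0∞)), tsum_eq_zero_add' ENNReal.summable]
    have : ∀ k : ℕ, ((k + 1 : ℕ) : ℝ≥0∞) * P {ω | A ω = k + 1}
        = ENNReal.ofReal lam * P {ω | A ω = k} := by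
      intro k
      rw [hpois, hpois, ← ENNReal.ofReal_natCast, ← ENNReal.ofReal_mul (by positivity),
        ← ENNReal.ofReal_mul hlam.le]
      congr 1
      rw [Nat.factorial_succ]
      push_cast
      have : (k.factorial : ℝ) ≠ 0 := by positivity
      field_simp
      ring
    simp only [this, ENNReal.tsum_mul_left, hone]
    simp
  have hmul : ∀ f : ℕ → ℝ≥0∞, ∫⁻ ω, (A ω : ℝ≥0∞) * f (X ω) ∂P
      = ENNReal.ofReal lam * ∫⁻ ω, f (X ω) ∂P := by
    intro f
    rw [← hEA]
    exact lintegral_mul_eq_lintegral_mul_lintegral_of_indepFun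
      ((hnat (fun k => (k : ℝ≥0∞))).comp hA) ((hnat f).comp hX)
      (hAX.comp (φ := fun k : ℕ => (k : ℝ≥0∞)) (ψ := f) (hnat _) (hnat _))
  have hfx : ∀ f : ℕ → ℝ≥0∞, ∫⁻ ω, f (X ω) ∂P = ∫⁻ ω, f (A ω * X ω + 1) ∂P := by
    intro f
    rw [← lintegral_map (hnat f) hX, hfix,
      lintegral_map (g := fun ω => A ω * X ω + 1) (hnat f) ((hA.mul hX).add measurable_const)]
  have hfixE : ∫⁻ ω, (X ω : ℝ≥0∞) ∂P = ENNReal.ofReal lam * ∫⁻ ω, (X ω : ℝ≥0∞) ∂P + 1 := by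
    rw [← hmul (fun k => (k : ℝ≥0∞))]
    conv_lhs => rw [hfx (fun k => (k : ℝ≥0∞))]
    push_cast
    rw [lintegral_add_right _ measurable_const]
    simp
  have hreal : ∀ m : ℝ≥0∞, m ≠ ⊤ → m ≤ ENNReal.ofReal lam * m + 1 →
      m.toReal ≤ lam * m.toReal + 1 := by
    intro m hm h
    have := ENNReal.toReal_mono (by finiteness) h
    rwa [ENNReal.toReal_add (by finiteness) (by finiteness), ENNReal.toReal_mul,
      ENNReal.toReal_ofReal hlam.le, ENNReal.toReal_one] at this
  have hfin : lam < 1 → ∫⁻ ω, (X ω : ℝ≥0∞) ∂P < ⊤ := by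
    intro hl
    have hb : ∀ n : ℕ, ∫⁻ ω, ((min (X ω) n : ℕ) : ℝ≥0∞) ∂P ≤ ENNReal.ofReal (1 / (1 - lam)) := by
      intro n
      have hne : ∫⁻ ω, ((min (X ω) n : ℕ) : ℝ≥0∞) ∂P ≠ ⊤ := by
        refine ne_of_lt (lt_of_le_of_lt (lintegral_mono (g := fun _ => (n : ℝ≥0∞)) ?_) ?_)
        · intro ω
          exact Nat.cast_le.2 (min_le_right _ _)
        · simp
      have hle : ∫⁻ ω, ((min (X ω) n : ℕ) : ℝ≥0∞) ∂P
          ≤ ENNReal.ofReal lam * ∫⁻ ω, ((min (X ω) n : ℕ) : ℝ≥0∞) ∂P + 1 := by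
        rw [← hmul (fun k => ((min k n : ℕ) : ℝ≥0∞))]
        conv_lhs => rw [hfx (fun k => ((min k n : ℕ) : ℝ≥0∞))]
        have h1 : (1 : ℝ≥0∞) = ∫⁻ _ω, 1 ∂P := by simp
        conv_rhs => rw [h1]
        rw [← lintegral_add_right _ measurable_const]
        refine lintegral_mono fun ω => ?_
        have : min (A ω * X ω + 1) n ≤ A ω * min (X ω) n + 1 := by
          rcases le_total (X ω) n with h | h
          · rw [min_eq_left h]
            exact min_le_left _ _
          · rw [min_eq_right h]
            rcases Nat.eq_zero_or_pos (A ω) with h0 | h0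
            · simp [h0]
            · exact (min_le_right _ _).trans (by nlinarith)
        have h2 : ((min (A ω * X ω + 1) n : ℕ) : ℝ≥0∞) ≤ ((A ω * min (X ω) n + 1 : ℕ) : ℝ≥0∞) :=
          Nat.cast_le.2 this
        rwa [Nat.cast_add, Nat.cast_mul, Nat.cast_one] at h2
      have := hreal _ hne hle
      rw [← ENNReal.ofReal_toReal hne]
      apply ENNReal.ofReal_le_ofReal
      rw [le_div_iff₀ (by linarith)]
      linarith
    have hs : ∀ ω, (X ω : ℝ≥0∞) = ⨆ n : ℕ, ((min (X ω) n : ℕ) : ℝ≥0∞) := by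
      intro ω
      apply le_antisymm
      · refine le_iSup_of_le (X ω) ?_
        simp
      · exact iSup_le fun n => Nat.cast_le.2 (min_le_left _ _)
    simp_rw [hs]
    rw [lintegral_iSup (f := fun (n : ℕ) ω => ((min (X ω) n : ℕ) : ℝ≥0∞))
      (fun n => (hnat (fun k => ((min k n : ℕ) : ℝ≥0∞))).comp hX)]
    · exact lt_of_le_of_lt (iSup_le hb) ENNReal.ofReal_lt_top
    · intro a b hab ω
      exact Nat.cast_le.2 (min_le_min_left _ hab)
  have heq : ∫⁻ ω, (X ω : ℝ≥0∞) ∂P < ⊤ →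
      (∫⁻ ω, (X ω : ℝ≥0∞) ∂P).toReal = lam * (∫⁻ ω, (X ω : ℝ≥0∞) ∂P).toReal + 1 := by
    intro h
    have h' := h.ne
    have := congrArg ENNReal.toReal hfixE
    rwa [ENNReal.toReal_add (by finiteness) (by finiteness), ENNReal.toReal_mul,
      ENNReal.toReal_ofReal hlam.le, ENNReal.toReal_one] at this
  refine ⟨⟨fun h => ?_, hfin⟩, fun hl => ?_⟩
  · have h1 := heq h
    have h2 : 0 ≤ (∫⁻ ω, (X ω : ℝ≥0∞) ∂P).toReal := ENNReal.toReal_nonneg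
    by_contra! hc
    nlinarith
  · have h1 := heq (hfin hl)
    rw [← ENNReal.ofReal_toReal (hfin hl).ne]
    congr 1
    rw [_root_.eq_div_iff (by linarith)]
    linarith
end

section
/- Suppose A has the Poisson distribution with parameter λ > 0, i.e., ℙ[A = k] = e^{−λ} λ^k / k! for k ∈ ℕ. Then E[X²] < ∞ if and only if λ < (√5 − 1)/2 (equivalently λ² + λ < 1), and in that case Var(X) = −λ / ((λ − 1)² (λ² + λ − 1)). -/
open MeasureTheory ProbabilityTheory ENNReal

lemma aux_pois (p : ℕ → ℝ≥0∞) (L : ℝ≥0∞) (h1 : ∑' k, p k = 1)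
    (hp : ∀ k : ℕ, ((k + 1 : ℕ) : ℝ≥0∞) * p (k + 1) = L * p k) :
    ∑' k : ℕ, (k : ℝ≥0∞) * p k = L ∧ ∑' k : ℕ, (k : ℝ≥0∞) ^ 2 * p k = L * (L + 1) := by
  have e1 : ∑' k : ℕ, (k : ℝ≥0∞) * p k = L := by
    rw [tsum_eq_zero_add' ENNReal.summable]
    simp_rw [hp]
    rw [ENNReal.tsum_mul_left, h1]; simp
  refine ⟨e1, ?_⟩
  rw [tsum_eq_zero_add' ENNReal.summable]
  have : ∀ k : ℕ, ((k + 1 : ℕ) : ℝ≥0∞) ^ 2 * p (k + 1) = L * ((k : ℝ≥0∞) * p k + p k) := by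
    intro k
    rw [pow_two, mul_assoc, hp]; push_cast; ring
  simp_rw [this]
  rw [ENNReal.tsum_mul_left, ENNReal.tsum_add, e1, h1]; simp

lemma aux_mom {Ω : Type*} [MeasurableSpace Ω] {P : Measure Ω} [IsProbabilityMeasure P]
    {A Y : Ω → ℕ} (hA : Measurable A) (hY : Measurable Y) (hAY : IndepFun A Y P)
    {q L : ℝ≥0∞} (h1 : ∫⁻ ω, (A ω : ℝ≥0∞) ∂P = L) (h2 : ∫⁻ ω, (A ω : ℝ≥0∞) ^ 2 ∂P = q) :
    ∫⁻ ω, ((A ω * Y ω + 1 : ℕ) : ℝ≥0∞) ∂P = L * ∫⁻ ω, (Y ω : ℝ≥0∞) ∂P + 1 ∧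
    ∫⁻ ω, ((A ω * Y ω + 1 : ℕ) : ℝ≥0∞) ^ 2 ∂P =
      q * ∫⁻ ω, (Y ω : ℝ≥0∞) ^ 2 ∂P + 2 * (L * ∫⁻ ω, (Y ω : ℝ≥0∞) ∂P) + 1 := by
  have mA : Measurable fun ω => (A ω : ℝ≥0∞) := measurable_from_top.comp hA
  have mY : Measurable fun ω => (Y ω : ℝ≥0∞) := measurable_from_top.comp hY
  have i1 : ∫⁻ ω, (A ω : ℝ≥0∞) * (Y ω : ℝ≥0∞) ∂P = L * ∫⁻ ω, (Y ω : ℝ≥0∞) ∂P := by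
    rw [← h1]
    exact lintegral_mul_eq_lintegral_mul_lintegral_of_indepFun mA mY
      (hAY.comp (φ := fun n : ℕ => (n : ℝ≥0∞)) (ψ := fun n : ℕ => (n : ℝ≥0∞))
        measurable_from_top measurable_from_top)
  have i2 : ∫⁻ ω, (A ω : ℝ≥0∞) ^ 2 * (Y ω : ℝ≥0∞) ^ 2 ∂P
      = q * ∫⁻ ω, (Y ω : ℝ≥0∞) ^ 2 ∂P := by
    rw [← h2]
    exact lintegral_mul_eq_lintegral_mul_lintegral_of_indepFun (mA.pow_const 2) (mY.pow_const 2)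
      (hAY.comp (φ := fun n : ℕ => (n : ℝ≥0∞) ^ 2) (ψ := fun n : ℕ => (n : ℝ≥0∞) ^ 2)
        measurable_from_top measurable_from_top)
  constructor
  · push_cast
    rw [lintegral_add_right _ measurable_const, i1]; simp
  · have : ∀ ω, ((A ω * Y ω + 1 : ℕ) : ℝ≥0∞) ^ 2 =
      ((A ω : ℝ≥0∞) ^ 2 * (Y ω : ℝ≥0∞) ^ 2 + 2 * ((A ω : ℝ≥0∞) * (Y ω : ℝ≥0∞))) + 1 := by
      intro ω; push_cast; ring
    simp_rw [this]
    rw [lintegral_add_right _ measurable_const, lintegral_add_right _ (by fun_prop),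
      lintegral_const_mul _ (by fun_prop), i1, i2]; simp

lemma aux_bd (lam : ℝ) (hlam : 0 < lam) (h : lam ^ 2 + lam < 1) {a b : ℝ≥0∞}
    (ha : a ≠ ⊤) (hb : b ≠ ⊤) (h1 : b ≤ ENNReal.ofReal lam * b + 1)
    (h2 : a ≤ ENNReal.ofReal lam * (ENNReal.ofReal lam + 1) * a
      + 2 * (ENNReal.ofReal lam * b) + 1) :
    a ≤ ENNReal.ofReal ((1 + 2 * lam / (1 - lam)) / (1 - (lam ^ 2 + lam))) := by
  lift a to NNReal using ha
  lift b to NNReal using hb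
  obtain ⟨L, hL, hl⟩ : ∃ L : NNReal, (L : ℝ) = lam ∧ ENNReal.ofReal lam = (L : ℝ≥0∞) :=
    ⟨lam.toNNReal, Real.coe_toNNReal lam hlam.le, rfl⟩
  rw [hl] at h1 h2
  norm_cast at h1 h2
  rw [← NNReal.coe_le_coe] at h1 h2
  push_cast at h1 h2
  rw [hL] at h1 h2
  have hb0 := b.2
  have l1 : 0 < 1 - lam := by nlinarith
  have hb' : (b : ℝ) ≤ 1 / (1 - lam) := by
    rw [le_div_iff₀ l1]; nlinarith
  rw [← ENNReal.ofReal_coe_nnreal]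
  apply ENNReal.ofReal_le_ofReal
  rw [le_div_iff₀ (by linarith)]
  have : lam * b ≤ lam * (1 / (1 - lam)) := by gcongr
  have e : 2 * lam / (1 - lam) = 2 * (lam * (1 / (1 - lam))) := by ring
  rw [e]
  nlinarith

theorem stmt_5 {Ω : Type*} [MeasurableSpace Ω] {P : Measure Ω} [IsProbabilityMeasure P]
    {A X : Ω → ℕ} (hA : Measurable A) (hX : Measurable X)
    (hAX : IndepFun A X P)
    (h0 : 0 < P {ω | A ω = 0})
    (hfix : Measure.map X P = Measure.map (fun ω => A ω * X ω + 1) P)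
    (lam : ℝ) (hlam : 0 < lam)
    (hpois : ∀ k : ℕ, P {ω | A ω = k} =
      ENNReal.ofReal (Real.exp (-lam) * lam ^ k / (Nat.factorial k))) :
    (lam < (Real.sqrt 5 - 1) / 2 ↔ lam ^ 2 + lam < 1) ∧
    ((∫⁻ ω, (X ω : ℝ≥0∞) ^ 2 ∂P) < ⊤ ↔ lam < (Real.sqrt 5 - 1) / 2) ∧
    (lam < (Real.sqrt 5 - 1) / 2 →
      (∫⁻ ω, (X ω : ℝ≥0∞) ^ 2 ∂P) - (∫⁻ ω, (X ω : ℝ≥0∞) ∂P) ^ 2 =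
        ENNReal.ofReal (-lam / ((lam - 1) ^ 2 * (lam ^ 2 + lam - 1)))) := by
  have hiff : lam < (Real.sqrt 5 - 1) / 2 ↔ lam ^ 2 + lam < 1 := by
    have s := Real.sq_sqrt (show (0:ℝ) ≤ 5 by norm_num)
    have s0 := Real.sqrt_nonneg 5
    constructor
    · intro h; nlinarith
    · intro h
      have : 2 * lam + 1 < Real.sqrt 5 := by
        apply Real.lt_sqrt_of_sq_lt; nlinarith
      linarith
  -- moments of A
  have hmap : ∀ f : ℕ → ℝ≥0∞, ∫⁻ ω, f (A ω) ∂P = ∑' k, f k * P {ω | A ω = k} := by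
    intro f
    rw [← lintegral_map (f := f) (g := A) measurable_from_top hA, lintegral_countable']
    congr 1; ext k
    rw [Measure.map_apply hA (measurableSet_singleton k)]; rfl
  have hrec : ∀ k : ℕ, ((k + 1 : ℕ) : ℝ≥0∞) * P {ω | A ω = k + 1}
      = ENNReal.ofReal lam * P {ω | A ω = k} := by
    intro k
    rw [hpois, hpois, ← ENNReal.ofReal_natCast, ← ENNReal.ofReal_mul (by positivity),
      ← ENNReal.ofReal_mul (by positivity)]
    congr 1
    rw [Nat.factorial_succ]; push_cast
    have := Nat.factorial_pos k
    field_simp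
    ring
  obtain ⟨hA1, hA2⟩ := aux_pois (fun k => P {ω | A ω = k}) (ENNReal.ofReal lam)
    (by have := hmap (fun _ => 1); simpa using this.symm) hrec
  rw [← hmap (fun k => (k : ℝ≥0∞))] at hA1
  rw [← hmap (fun k => (k : ℝ≥0∞) ^ 2)] at hA2
  have hXm : ∀ f : ℕ → ℝ≥0∞, ∫⁻ ω, f (X ω) ∂P = ∫⁻ ω, f (A ω * X ω + 1) ∂P := by
    intro f
    have mAX : Measurable fun ω => A ω * X ω + 1 := (hA.mul hX).add_const 1
    rw [← lintegral_map (f := f) (g := X) measurable_from_top hX, hfix,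
      lintegral_map measurable_from_top mAX]
  obtain ⟨m1, m2⟩ := aux_mom hA hX hAX hA1 hA2
  rw [← hXm (fun n => (n : ℝ≥0∞))] at m1
  rw [← hXm (fun n => (n : ℝ≥0∞) ^ 2)] at m2
  have hle : ∫⁻ ω, (X ω : ℝ≥0∞) ∂P ≤ ∫⁻ ω, (X ω : ℝ≥0∞) ^ 2 ∂P := by
    apply lintegral_mono; intro ω
    show (X ω : ℝ≥0∞) ≤ (X ω : ℝ≥0∞) ^ 2
    exact_mod_cast Nat.le_self_pow two_ne_zero (X ω)
  -- finiteness
  have hfin : lam ^ 2 + lam < 1 → ∫⁻ ω, (X ω : ℝ≥0∞) ^ 2 ∂P < ⊤ := by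
    intro h
    have hbd : ∀ n : ℕ, ∫⁻ ω, ((min (X ω) n : ℕ) : ℝ≥0∞) ^ 2 ∂P ≤
        ENNReal.ofReal ((1 + 2 * lam / (1 - lam)) / (1 - (lam ^ 2 + lam))) := by
      intro n
      have mY : Measurable fun ω => min (X ω) n := hX.min measurable_const
      have hind : IndepFun A (fun ω => min (X ω) n) P :=
        hAX.comp (φ := id) (ψ := fun k => min k n) measurable_id measurable_from_top
      obtain ⟨k1, k2⟩ := aux_mom hA mY hind hA1 hA2
      have key : ∀ ω, min (A ω * X ω + 1) n ≤ A ω * min (X ω) n + 1 := by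
        intro ω
        rcases le_total (X ω) n with hc | hc
        · rw [min_eq_left hc]; exact min_le_left _ _
        · rw [min_eq_right hc]
          rcases Nat.eq_zero_or_pos (A ω) with ha | ha
          · simp [ha]
          · exact (min_le_right _ _).trans (by nlinarith)
      apply aux_bd lam hlam h (b := ∫⁻ ω, ((min (X ω) n : ℕ) : ℝ≥0∞) ∂P)
      · refine ((lintegral_mono (g := fun _ => (n : ℝ≥0∞) ^ 2) ?_).trans_lt ?_).ne
        · intro ω
          show ((min (X ω) n : ℕ) : ℝ≥0∞) ^ 2 ≤ (n : ℝ≥0∞) ^ 2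
          gcongr; exact min_le_right _ _
        · simp
      · refine ((lintegral_mono (g := fun _ => (n : ℝ≥0∞)) ?_).trans_lt ?_).ne
        · intro ω
          show ((min (X ω) n : ℕ) : ℝ≥0∞) ≤ (n : ℝ≥0∞)
          gcongr; exact min_le_right _ _
        · simp
      · rw [← k1, hXm (fun k => ((min k n : ℕ) : ℝ≥0∞))]
        apply lintegral_mono; intro ω
        exact Nat.cast_le.2 (key ω)
      · rw [← k2, hXm (fun k => ((min k n : ℕ) : ℝ≥0∞) ^ 2)]
        apply lintegral_mono; intro ω
        exact pow_le_pow_left' (Nat.cast_le.2 (key ω)) 2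
    have hlim := lintegral_tendsto_of_tendsto_of_monotone (μ := P)
      (f := fun (n : ℕ) ω => ((min (X ω) n : ℕ) : ℝ≥0∞) ^ 2) (F := fun ω => (X ω : ℝ≥0∞) ^ 2)
      (fun n => ((measurable_from_top (f := fun k : ℕ => ((min k n : ℕ) : ℝ≥0∞) ^ 2)).comp
        hX).aemeasurable)
      (Filter.Eventually.of_forall fun ω i j hij =>
        pow_le_pow_left' (Nat.cast_le.2 (min_le_min_left _ hij)) 2)
      (Filter.Eventually.of_forall fun ω => by
        apply tendsto_const_nhds.congr'
        filter_upwards [Filter.eventually_ge_atTop (X ω)] with n hn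
        rw [min_eq_left hn])
    exact (le_of_tendsto' hlim hbd).trans_lt ENNReal.ofReal_lt_top
  obtain ⟨L, hL, hl⟩ : ∃ L : NNReal, (L : ℝ) = lam ∧ ENNReal.ofReal lam = (L : ℝ≥0∞) :=
    ⟨lam.toNNReal, Real.coe_toNNReal lam hlam.le, rfl⟩
  generalize (∫⁻ ω, (X ω : ℝ≥0∞) ^ 2 ∂P) = a at *
  generalize (∫⁻ ω, (X ω : ℝ≥0∞) ∂P) = b at *
  have hreal : a < ⊤ → ∃ u v : NNReal, a = u ∧ b = v ∧ (v : ℝ) = lam * v + 1 ∧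
      (u : ℝ) = lam * (lam + 1) * u + 2 * (lam * v) + 1 := by
    intro ha
    have hb := hle.trans_lt ha
    lift a to NNReal using ha.ne
    lift b to NNReal using hb.ne
    refine ⟨a, b, rfl, rfl, ?_⟩
    rw [hl] at m1 m2
    norm_cast at m1 m2
    rw [← NNReal.coe_inj] at m1 m2
    push_cast at m1 m2
    rw [hL] at m1 m2
    exact ⟨m1, m2⟩
  rw [hiff]
  refine ⟨Iff.rfl, ⟨fun ha => ?_, hfin⟩, fun h => ?_⟩
  · obtain ⟨u, v, -, -, e1, e2⟩ := hreal ha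
    by_contra hc
    push Not at hc
    have := mul_nonneg hlam.le v.2
    have := mul_nonneg (sub_nonneg.2 hc) u.2
    simp only [NNReal.val_eq_coe] at *
    nlinarith
  · obtain ⟨u, v, rfl, rfl, e1, e2⟩ := hreal (hfin h)
    have l1 : 1 - lam ≠ 0 := by nlinarith
    have l1' : lam - 1 ≠ 0 := by nlinarith
    have l2 : 1 - (lam ^ 2 + lam) ≠ 0 := by linarith
    have l2' : lam ^ 2 + lam - 1 ≠ 0 := by linarith
    have hv : (v : ℝ) = 1 / (1 - lam) := by
      rw [eq_div_iff l1]; linarith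
    have hu : (u : ℝ) = (2 * (lam * v) + 1) / (1 - (lam ^ 2 + lam)) := by
      rw [eq_div_iff l2]; linarith
    rw [← ENNReal.ofReal_coe_nnreal, ← ENNReal.ofReal_coe_nnreal, ← ENNReal.ofReal_pow (NNReal.coe_nonneg v),
      ← ENNReal.ofReal_sub _ (by positivity)]
    congr 1
    rw [hu, hv]
    have d1 : (1 - lam) = -(lam - 1) := by ring
    have d2 : 1 - (lam ^ 2 + lam) = -(lam ^ 2 + lam - 1) := by ring
    rw [d1, d2]
    generalize hw : lam ^ 2 + lam - 1 = w at *
    field_simp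
    rw [← hw]
    ring
end

section
/- Suppose A has the binomial distribution with parameters n ≥ 1 and 0 < p < 1, i.e., ℙ[A = k] = C(n,k) p^k (1−p)^{n−k} for 0 ≤ k ≤ n. Then E[X] < ∞ if and only if n·p < 1 (which always holds when n = 1), and in that case E[X] = 1 / (1 − n·p). -/
open MeasureTheory ProbabilityTheory ENNReal

theorem aux_mean {Ω : Type*} [MeasurableSpace Ω] {P : Measure Ω} [IsProbabilityMeasure P]
    {A : Ω → ℕ} (hA : Measurable A)
    (n : ℕ) (p : ℝ) (hp0 : 0 < p) (hp1 : p < 1)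
    (hbin : ∀ k : ℕ, k ≤ n → P {ω | A ω = k} =
      ENNReal.ofReal ((n.choose k : ℝ) * p ^ k * (1 - p) ^ (n - k))) :
    ∫⁻ ω, (A ω : ℝ≥0∞) ∂P = ENNReal.ofReal (n * p) := by
  have hnn : ∀ k, 0 ≤ (n.choose k : ℝ) * p ^ k * (1 - p) ^ (n - k) := by
    intro k
    have : 0 ≤ 1 - p := by linarith
    positivity
  have hs1 : ∑ k ∈ Finset.range (n+1), (n.choose k : ℝ) * p ^ k * (1 - p) ^ (n - k) = 1 := by
    have h := congrArg (Polynomial.eval p) (bernsteinPolynomial.sum ℝ n)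
    simpa [Polynomial.eval_finsetSum, bernsteinPolynomial] using h
  have hs2 : ∑ k ∈ Finset.range (n+1), (k : ℝ) * ((n.choose k : ℝ) * p ^ k * (1 - p) ^ (n - k))
      = n * p := by
    have h := congrArg (Polynomial.eval p) (bernsteinPolynomial.sum_smul ℝ n)
    simpa [Polynomial.eval_finsetSum, bernsteinPolynomial] using h
  have hmap : ∀ k, Measure.map A P {k} = P {ω | A ω = k} := by
    intro k
    rw [Measure.map_apply hA (measurableSet_singleton k)]
    rfl
  have : IsProbabilityMeasure (Measure.map A P) := Measure.isProbabilityMeasure_map hA.aemeasurable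
  have hfin : Measure.map A P (Finset.range (n+1) : Set ℕ) = 1 := by
    rw [← sum_measure_singleton, Finset.sum_congr rfl (g := fun k => ENNReal.ofReal
      ((n.choose k : ℝ) * p ^ k * (1 - p) ^ (n - k))), ← ENNReal.ofReal_sum_of_nonneg, hs1]
    · simp
    · intro i _; exact hnn i
    · intro k hk
      rw [hmap, hbin k (by simpa [Nat.lt_succ_iff] using hk)]
  have hz : ∀ k, k ∉ Finset.range (n+1) → Measure.map A P {k} = 0 := by
    intro k hk
    have h := (prob_compl_eq_zero_iff (μ := Measure.map A P)
      (Finset.measurableSet (Finset.range (n+1)))).2 hfin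
    refine measure_mono_null ?_ h
    intro x hx
    rw [Set.mem_singleton_iff] at hx
    subst hx
    simpa using hk
  have e : ∫⁻ ω, (A ω : ℝ≥0∞) ∂P = ∫⁻ k, (k : ℝ≥0∞) ∂(Measure.map A P) := by
    rw [lintegral_map (by fun_prop) hA]
  rw [e, lintegral_countable', tsum_eq_sum (s := Finset.range (n+1)), ← hs2,
    ENNReal.ofReal_sum_of_nonneg]
  · refine Finset.sum_congr rfl fun k hk => ?_
    rw [hmap, hbin k (by simpa [Nat.lt_succ_iff] using hk), ENNReal.ofReal_mul (p := (k : ℝ)) (Nat.cast_nonneg k),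
      ENNReal.ofReal_natCast]
  · intro i _; exact mul_nonneg (by positivity) (hnn i)
  · intro k hk; rw [hz k hk, mul_zero]

theorem aux_solve {m : ℝ≥0∞} {q : ℝ} (hq : 0 ≤ q) (hm : m < ⊤) :
    (m = ENNReal.ofReal q * m + 1 → q < 1 ∧ m = ENNReal.ofReal (1 / (1 - q))) ∧
    (q < 1 → m ≤ ENNReal.ofReal q * m + 1 → m ≤ ENNReal.ofReal (1 / (1 - q))) := by
  lift m to NNReal using hm.ne
  lift q to NNReal using hq
  rw [ENNReal.ofReal_coe_nnreal]
  constructor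
  · intro h
    have h' : (m : ℝ) = q * m + 1 := by exact_mod_cast h
    have hm0 : (0:ℝ) ≤ m := m.2
    have h1 : (q : ℝ) < 1 := by
      by_contra hc
      nlinarith
    refine ⟨h1, ?_⟩
    have : (1 / (1 - q) : ℝ) = m := by
      have : (1 - q : ℝ) ≠ 0 := by linarith
      field_simp
      linarith
    rw [this, ENNReal.ofReal_coe_nnreal]
  · intro h1 h
    have h' : (m : ℝ) ≤ q * m + 1 := by exact_mod_cast h
    rw [← ENNReal.ofReal_coe_nnreal]
    apply ENNReal.ofReal_le_ofReal
    rw [le_div_iff₀ (by linarith)]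
    linarith

theorem stmt_6 {Ω : Type*} [MeasurableSpace Ω] {P : Measure Ω} [IsProbabilityMeasure P]
    {A X : Ω → ℕ} (hA : Measurable A) (hX : Measurable X)
    (hAX : IndepFun A X P)
    (h0 : 0 < P {ω | A ω = 0})
    (hfix : Measure.map X P = Measure.map (fun ω => A ω * X ω + 1) P)
    (n : ℕ) (hn : 1 ≤ n) (p : ℝ) (hp0 : 0 < p) (hp1 : p < 1)
    (hbin : ∀ k : ℕ, k ≤ n → P {ω | A ω = k} =
      ENNReal.ofReal ((n.choose k : ℝ) * p ^ k * (1 - p) ^ (n - k))) :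
    ((∫⁻ ω, (X ω : ℝ≥0∞) ∂P) < ⊤ ↔ (n : ℝ) * p < 1) ∧
    (n = 1 → (n : ℝ) * p < 1) ∧
    ((n : ℝ) * p < 1 → ∫⁻ ω, (X ω : ℝ≥0∞) ∂P = ENNReal.ofReal (1 / (1 - n * p))) := by
  have hmean := aux_mean hA n p hp0 hp1 hbin
  have hq : 0 ≤ (n : ℝ) * p := by positivity
  have hY : Measurable (fun ω => A ω * X ω + 1) := by fun_prop
  have hf : ∀ f : ℕ → ℝ≥0∞, ∫⁻ ω, f (X ω) ∂P = ∫⁻ ω, f (A ω * X ω + 1) ∂P := by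
    intro f
    have hfm : Measurable f := measurable_of_countable f
    rw [← lintegral_map hfm hX, hfix, lintegral_map hfm hY]
  have hprod : ∀ f : ℕ → ℝ≥0∞, ∫⁻ ω, (A ω : ℝ≥0∞) * f (X ω) ∂P
      = ENNReal.ofReal (n * p) * ∫⁻ ω, f (X ω) ∂P := by
    intro f
    have hfm : Measurable f := measurable_of_countable f
    have hc : Measurable (fun k : ℕ => (k : ℝ≥0∞)) := measurable_of_countable _
    rw [← hmean]
    exact lintegral_mul_eq_lintegral_mul_lintegral_of_indepFun'' (hc.comp hA).aemeasurable
      (hfm.comp hX).aemeasurable (hAX.comp hc hfm)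
  have heq : ∫⁻ ω, (X ω : ℝ≥0∞) ∂P = ENNReal.ofReal (n * p) * ∫⁻ ω, (X ω : ℝ≥0∞) ∂P + 1 := by
    rw [← hprod (fun k => (k : ℝ≥0∞)), hf (fun k => (k : ℝ≥0∞))]
    push_cast
    rw [lintegral_add_right _ measurable_const]
    simp
  have hle : (n : ℝ) * p < 1 → ∫⁻ ω, (X ω : ℝ≥0∞) ∂P < ⊤ := by
    intro h1
    have hM : ∀ M : ℕ, ∫⁻ ω, ((min (X ω) M : ℕ) : ℝ≥0∞) ∂P ≤ ENNReal.ofReal (1 / (1 - n * p)) := by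
      intro M
      refine (aux_solve hq ?_).2 h1 ?_
      · calc ∫⁻ ω, ((min (X ω) M : ℕ) : ℝ≥0∞) ∂P ≤ ∫⁻ ω, (M : ℝ≥0∞) ∂P :=
              lintegral_mono fun ω => (Nat.cast_le (α := ℝ≥0∞)).2 (min_le_right _ _)
          _ < ⊤ := by simp
      · rw [← hprod (fun k => ((min k M : ℕ) : ℝ≥0∞)), hf (fun k => ((min k M : ℕ) : ℝ≥0∞))]
        calc _ ≤ ∫⁻ ω, ((A ω : ℝ≥0∞) * ((min (X ω) M : ℕ) : ℝ≥0∞) + 1) ∂P := by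
              refine lintegral_mono fun ω => ?_
              have : min (A ω * X ω + 1) M ≤ A ω * min (X ω) M + 1 := by
                rcases le_total (X ω) M with h | h
                · rw [min_eq_left h]; exact min_le_left _ _
                · rw [min_eq_right h]
                  rcases Nat.eq_zero_or_pos (A ω) with h | h
                  · simp [h]
                  · exact (min_le_right _ _).trans (by nlinarith)
              have h2 := (Nat.cast_le (α := ℝ≥0∞)).2 this
              rwa [Nat.cast_add, Nat.cast_mul, Nat.cast_one] at h2
          _ = _ := by
              rw [lintegral_add_right _ measurable_const]
              simp
    have hsup : ∀ ω, (X ω : ℝ≥0∞) = ⨆ M : ℕ, ((min (X ω) M : ℕ) : ℝ≥0∞) := by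
      intro ω
      apply le_antisymm
      · refine le_iSup_of_le (X ω) ?_
        simp
      · exact iSup_le fun M => (Nat.cast_le (α := ℝ≥0∞)).2 (min_le_left _ _)
    simp_rw [hsup]
    rw [lintegral_iSup]
    · exact (iSup_le hM).trans_lt ENNReal.ofReal_lt_top
    · intro M
      exact (measurable_of_countable (fun k : ℕ => ((min k M : ℕ) : ℝ≥0∞))).comp hX
    · intro a b hab ω
      have : min (X ω) a ≤ min (X ω) b := min_le_min_left _ hab
      exact (Nat.cast_le (α := ℝ≥0∞)).2 this
  refine ⟨⟨fun h => ((aux_solve hq h).1 heq).1, hle⟩, ?_, fun h => ((aux_solve hq (hle h)).1 heq).2⟩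
  rintro rfl
  simpa using hp1
end

section
/- Suppose A has the negative binomial distribution with parameters r ≥ 1 (an integer) and 0 < p < 1, i.e., ℙ[A = k] = C(k + r − 1, k) p^r (1−p)^k for k ∈ ℕ (so E[A] = r(1−p)/p). Then E[X] < ∞ if and only if p > r/(1 + r), and in that case E[X] = p / (p·r + p − r). -/
open MeasureTheory ProbabilityTheory ENNReal

theorem nb_mean (r : ℕ) (hr : 1 ≤ r) (p : ℝ) (hp0 : 0 < p) (hp1 : p < 1) :
    HasSum (fun k : ℕ => (k : ℝ) * (((k + r - 1).choose k : ℝ) * p ^ r * (1 - p) ^ k))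
      (r * (1 - p) / p) := by
  rw [← hasSum_nat_add_iff' 1]
  have hq : ‖(1 - p : ℝ)‖ < 1 := by
    rw [Real.norm_eq_abs, abs_of_pos (by linarith)]; linarith
  have h := (hasSum_choose_mul_geometric_of_norm_lt_one r hq).mul_left (r * p ^ r * (1 - p))
  have e : (r * p ^ r * (1 - p)) * (1 / (1 - (1 - p)) ^ (r + 1)) = r * (1 - p) / p := by
    rw [_root_.sub_sub_cancel]; field_simp; ring
  rw [e] at h
  simp only [Finset.range_one, Finset.sum_singleton, Nat.cast_zero, zero_mul, sub_zero]
  refine (congrArg (fun f => HasSum f (r * (1 - p) / p)) (funext fun j => ?_)).mpr h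
  have h1 : (j + 1) * (j + 1 + r - 1).choose (j + 1) = r * (j + r).choose r := by
    obtain ⟨s, rfl⟩ : ∃ s, r = s + 1 := ⟨r - 1, by omega⟩
    have a2 := Nat.choose_succ_right_eq (j + s + 1) j
    have a3 : (j + (s + 1)).choose (s + 1) = (j + s + 1).choose j := by
      rw [← Nat.choose_symm_of_eq_add (show j + (s+1) = j + (s+1) from rfl)]; rfl
    have a4 : j + 1 + (s + 1) - 1 = j + s + 1 := by omega
    have a5 : j + s + 1 - j = s + 1 := by omega
    rw [a3, a4]
    rw [a5] at a2
    linarith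
  have h2 : ((j : ℝ) + 1) * ((j + 1 + r - 1).choose (j + 1) : ℝ) = r * ((j + r).choose r : ℝ) := by
    exact_mod_cast h1
  push_cast
  rw [pow_succ]
  linear_combination (p ^ r * ((1 - p) ^ j * (1 - p))) * h2

theorem stmt_8 {Ω : Type*} [MeasurableSpace Ω] {P : Measure Ω} [IsProbabilityMeasure P]
    {A X : Ω → ℕ} (hA : Measurable A) (hX : Measurable X)
    (hAX : IndepFun A X P)
    (h0 : 0 < P {ω | A ω = 0})
    (hfix : Measure.map X P = Measure.map (fun ω => A ω * X ω + 1) P)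
    (r : ℕ) (hr : 1 ≤ r) (p : ℝ) (hp0 : 0 < p) (hp1 : p < 1)
    (hnb : ∀ k : ℕ, P {ω | A ω = k} =
      ENNReal.ofReal (((k + r - 1).choose k : ℝ) * p ^ r * (1 - p) ^ k)) :
    ((∫⁻ ω, (X ω : ℝ≥0∞) ∂P) < ⊤ ↔ (r : ℝ) / (1 + r) < p) ∧
    ((r : ℝ) / (1 + r) < p →
      ∫⁻ ω, (X ω : ℝ≥0∞) ∂P = ENNReal.ofReal (p / (p * r + p - r))) := by
  have hq : 0 < 1 - p := by linarith
  set c : ℝ := r * (1 - p) / p with hc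
  have hc0 : 0 ≤ c := by positivity
  have hEA : ∫⁻ ω, (A ω : ℝ≥0∞) ∂P = ENNReal.ofReal c := by
    have h1 : ∫⁻ ω, (A ω : ℝ≥0∞) ∂P = ∫⁻ k, (k : ℝ≥0∞) ∂(Measure.map A P) :=
      (lintegral_map (f := fun k : ℕ => (k : ℝ≥0∞)) (by fun_prop) hA).symm
    have hs := nb_mean r hr p hp0 hp1
    rw [h1, lintegral_countable', hc, ← hs.tsum_eq, ENNReal.ofReal_tsum_of_nonneg _ hs.summable]
    · refine tsum_congr fun k => ?_
      rw [Measure.map_apply hA (measurableSet_singleton k),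
        ENNReal.ofReal_mul (by positivity), ENNReal.ofReal_natCast]
      congr 1
      exact hnb k
    · intro k; positivity
  have hmul : ∀ g : ℕ → ℝ≥0∞, ∫⁻ ω, (A ω : ℝ≥0∞) * g (X ω) ∂P
      = ENNReal.ofReal c * ∫⁻ ω, g (X ω) ∂P := by
    intro g
    rw [← hEA]
    have hi : IndepFun (fun ω => (A ω : ℝ≥0∞)) (fun ω => g (X ω)) P :=
      hAX.comp (φ := fun k : ℕ => (k : ℝ≥0∞)) (ψ := g) (by fun_prop) (by fun_prop)
    exact lintegral_mul_eq_lintegral_mul_lintegral_of_indepFun (by fun_prop) (by fun_prop) hi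
  have hfixg : ∀ g : ℕ → ℝ≥0∞, ∫⁻ ω, g (X ω) ∂P = ∫⁻ ω, g (A ω * X ω + 1) ∂P := by
    intro g
    rw [← lintegral_map (f := g) (by fun_prop) hX, hfix,
      lintegral_map (f := g) (by fun_prop) (by fun_prop)]
  have hEX : ∫⁻ ω, (X ω : ℝ≥0∞) ∂P = ENNReal.ofReal c * ∫⁻ ω, (X ω : ℝ≥0∞) ∂P + 1 := by
    rw [← hmul (fun k => (k : ℝ≥0∞)), hfixg (fun k => (k : ℝ≥0∞))]
    push_cast
    rw [lintegral_add_right _ (by fun_prop)]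
    simp
  have key : (r : ℝ) / (1 + r) < p ↔ c < 1 := by
    rw [hc, div_lt_iff₀ (by positivity), div_lt_one hp0]
    constructor <;> intro h <;> linarith
  have hreal : (∫⁻ ω, (X ω : ℝ≥0∞) ∂P) < ⊤ → 
      (∫⁻ ω, (X ω : ℝ≥0∞) ∂P).toReal = c * (∫⁻ ω, (X ω : ℝ≥0∞) ∂P).toReal + 1 := by
    intro h
    have h2 := congrArg ENNReal.toReal hEX
    rwa [ENNReal.toReal_add (ENNReal.mul_ne_top ENNReal.ofReal_ne_top h.ne) (by simp),
      ENNReal.toReal_mul, ENNReal.toReal_ofReal hc0, ENNReal.toReal_one] at h2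
  have hfin : c < 1 → (∫⁻ ω, (X ω : ℝ≥0∞) ∂P) < ⊤ := by
    intro hc1
    have hb : ∀ n : ℕ, ∫⁻ ω, ((min (X ω) n : ℕ) : ℝ≥0∞) ∂P ≤ ENNReal.ofReal (1 / (1 - c)) := by
      intro n
      have hle : ∫⁻ ω, ((min (X ω) n : ℕ) : ℝ≥0∞) ∂P
          ≤ ENNReal.ofReal c * ∫⁻ ω, ((min (X ω) n : ℕ) : ℝ≥0∞) ∂P + 1 := by
        rw [← hmul (fun k => ((min k n : ℕ) : ℝ≥0∞))]
        have h1 : ∫⁻ ω, ((A ω : ℝ≥0∞) * ((min (X ω) n : ℕ) : ℝ≥0∞) + 1) ∂P =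
            ∫⁻ ω, (A ω : ℝ≥0∞) * ((min (X ω) n : ℕ) : ℝ≥0∞) ∂P + 1 := by
          rw [lintegral_add_right _ (by fun_prop)]
          simp
        rw [← h1, hfixg (fun k => ((min k n : ℕ) : ℝ≥0∞))]
        refine lintegral_mono fun ω => ?_
        have h3 : min (A ω * X ω + 1) n ≤ A ω * min (X ω) n + 1 := by
          rcases Nat.eq_zero_or_pos (A ω) with h | h
          · simp [h]
          · rcases le_total (X ω) n with h' | h'
            · rw [min_eq_left h']; exact min_le_left _ _
            · rw [min_eq_right h']
              exact (min_le_right _ _).trans (by nlinarith)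
        have h4 : ((min (A ω * X ω + 1) n : ℕ) : ℝ≥0∞) ≤ ((A ω * min (X ω) n + 1 : ℕ) : ℝ≥0∞) :=
          Nat.cast_le.2 h3
        rw [Nat.cast_add, Nat.cast_mul, Nat.cast_one] at h4
        exact h4
      have hlt : ∫⁻ ω, ((min (X ω) n : ℕ) : ℝ≥0∞) ∂P ≠ ⊤ := by
        have : ∫⁻ ω, ((min (X ω) n : ℕ) : ℝ≥0∞) ∂P ≤ ∫⁻ ω, (n : ℝ≥0∞) ∂P :=
          lintegral_mono fun ω => Nat.cast_le.2 (min_le_right _ _)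
        refine ne_top_of_le_ne_top ?_ this
        simp
      rw [← ENNReal.ofReal_toReal hlt]
      apply ENNReal.ofReal_le_ofReal
      have h2 := ENNReal.toReal_mono
        (ENNReal.add_ne_top.2 ⟨ENNReal.mul_ne_top ENNReal.ofReal_ne_top hlt, by simp⟩) hle
      rw [ENNReal.toReal_add (ENNReal.mul_ne_top ENNReal.ofReal_ne_top hlt) (by simp),
        ENNReal.toReal_mul, ENNReal.toReal_ofReal hc0, ENNReal.toReal_one] at h2
      rw [le_div_iff₀ (by linarith)]
      linarith
    have hsup : ∫⁻ ω, (X ω : ℝ≥0∞) ∂P = ⨆ n : ℕ, ∫⁻ ω, ((min (X ω) n : ℕ) : ℝ≥0∞) ∂P := by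
      rw [← lintegral_iSup]
      · refine lintegral_congr fun ω => le_antisymm ?_ ?_
        · refine le_iSup_of_le (X ω) ?_
          simp
        · exact iSup_le fun n => Nat.cast_le.2 (min_le_left _ _)
      · intro n
        exact (Measurable.of_discrete (f := fun k : ℕ => ((min k n : ℕ) : ℝ≥0∞))).comp hX
      · intro m n hmn ω
        exact Nat.cast_le.2 (min_le_min_left (X ω) hmn)
    rw [hsup]
    exact (iSup_le hb).trans_lt ENNReal.ofReal_lt_top
  refine ⟨⟨fun h => key.2 ?_, fun h => hfin (key.1 h)⟩, fun h => ?_⟩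
  · have h1 := hreal h
    have h2 : 0 ≤ (∫⁻ ω, (X ω : ℝ≥0∞) ∂P).toReal := ENNReal.toReal_nonneg
    by_contra! h3
    nlinarith
  · have hc1 := key.1 h
    have hf := hfin hc1
    have h1 := hreal hf
    rw [← ENNReal.ofReal_toReal hf.ne]
    congr 1
    rw [div_lt_iff₀ (by positivity)] at h
    have hd : 0 < p * r + p - r := by linarith
    rw [eq_div_iff hd.ne']
    have hcp : c * p = r * (1 - p) := by rw [hc]; field_simp
    linear_combination p * h1 + (∫⁻ ω, (X ω : ℝ≥0∞) ∂P).toReal * hcp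
end

section
/- Suppose A has the geometric distribution with parameter 0 < p < 1, i.e., ℙ[A = k] = (1−p)^k · p for k ∈ ℕ (so E[A] = (1−p)/p). Then E[X] < ∞ if and only if p > 1/2, and in that case E[X] = p / (2p − 1). -/
open MeasureTheory ProbabilityTheory ENNReal

theorem stmt_10 {Ω : Type*} [MeasurableSpace Ω] {P : Measure Ω} [IsProbabilityMeasure P]
    {A X : Ω → ℕ} (hA : Measurable A) (hX : Measurable X)
    (hAX : IndepFun A X P)
    (h0 : 0 < P {ω | A ω = 0})
    (hfix : Measure.map X P = Measure.map (fun ω => A ω * X ω + 1) P)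
    (p : ℝ) (hp0 : 0 < p) (hp1 : p < 1)
    (hgeo : ∀ k : ℕ, P {ω | A ω = k} = ENNReal.ofReal ((1 - p) ^ k * p)) :
    ((∫⁻ ω, (X ω : ℝ≥0∞) ∂P) < ⊤ ↔ 1 / 2 < p) ∧
    (1 / 2 < p → ∫⁻ ω, (X ω : ℝ≥0∞) ∂P = ENNReal.ofReal (p / (2 * p - 1))) := by
  have mA : ∀ f : ℕ → ℝ≥0∞, Measurable f := fun f => measurable_from_top
  have hEA : ∫⁻ ω, (A ω : ℝ≥0∞) ∂P = ENNReal.ofReal ((1 - p) / p) := by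
    have h1 : ∫⁻ ω, (A ω : ℝ≥0∞) ∂P = ∫⁻ k, (k : ℝ≥0∞) ∂(Measure.map A P) :=
      (lintegral_map (mA fun k => (k : ℝ≥0∞)) hA).symm
    rw [h1, lintegral_countable']
    have h2 : ∀ k : ℕ, (k : ℝ≥0∞) * (Measure.map A P) {k}
        = ENNReal.ofReal ((k * (1 - p) ^ k) * p) := by
      intro k
      rw [Measure.map_apply hA (measurableSet_singleton k)]
      have : A ⁻¹' {k} = {ω | A ω = k} := rfl
      rw [this, hgeo k, mul_assoc, ENNReal.ofReal_mul (Nat.cast_nonneg k), ENNReal.ofReal_natCast]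
    simp_rw [h2]
    have hn : ‖1 - p‖ < 1 := by
      rw [Real.norm_eq_abs, abs_lt]; constructor <;> linarith
    have hs := (hasSum_coe_mul_geometric_of_norm_lt_one hn).mul_right p
    have hq : 0 ≤ 1 - p := by linarith
    rw [← ENNReal.ofReal_tsum_of_nonneg (fun k => by positivity) hs.summable, hs.tsum_eq]
    congr 1
    rw [_root_.sub_sub_cancel]
    field_simp
  have hf : ∀ f : ℕ → ℝ≥0∞, ∫⁻ ω, f (X ω) ∂P = ∫⁻ ω, f (A ω * X ω + 1) ∂P := by
    intro f
    rw [← lintegral_map (mA f) hX, hfix]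
    exact lintegral_map (mA f) ((hA.mul hX).add_const 1)
  have hprod : ∀ g : ℕ → ℝ≥0∞, ∫⁻ ω, ((A ω : ℝ≥0∞) * g (X ω) + 1) ∂P
      = ENNReal.ofReal ((1 - p) / p) * ∫⁻ ω, g (X ω) ∂P + 1 := by
    intro g
    rw [lintegral_add_right _ measurable_const, ← hEA]
    have := lintegral_mul_eq_lintegral_mul_lintegral_of_indepFun
      (μ := P) (f := fun ω => (A ω : ℝ≥0∞)) (g := fun ω => g (X ω))
      ((mA fun k => (k : ℝ≥0∞)).comp hA) ((mA g).comp hX)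
      (hAX.comp (mA fun k => (k : ℝ≥0∞)) (mA g))
    simp only [Pi.mul_apply] at this
    rw [this]; simp
  have ha0 : 0 ≤ (1 - p) / p := div_nonneg (by linarith) hp0.le
  have hE : ∫⁻ ω, (X ω : ℝ≥0∞) ∂P
      = ENNReal.ofReal ((1 - p) / p) * ∫⁻ ω, (X ω : ℝ≥0∞) ∂P + 1 := by
    rw [← hprod (fun k => (k : ℝ≥0∞)), hf (fun k => (k : ℝ≥0∞))]
    simp
  have htr : ∀ N : ℕ, ∫⁻ ω, ((min (X ω) N : ℕ) : ℝ≥0∞) ∂P ≤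
      ENNReal.ofReal ((1 - p) / p) * ∫⁻ ω, ((min (X ω) N : ℕ) : ℝ≥0∞) ∂P + 1 := by
    intro N
    rw [← hprod (fun k => ((min k N : ℕ) : ℝ≥0∞)), hf (fun k => ((min k N : ℕ) : ℝ≥0∞))]
    refine lintegral_mono fun ω => ?_
    have : min (A ω * X ω + 1) N ≤ A ω * min (X ω) N + 1 := by
      rcases Nat.eq_zero_or_pos (A ω) with h | h
      · simp [h]
      · rcases le_total (X ω) N with h' | h'
        · rw [min_eq_left h']; exact min_le_left _ _
        · rw [min_eq_right h']
          exact (min_le_right _ _).trans (by nlinarith)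
    have h3 := (Nat.cast_le (α := ℝ≥0∞)).2 this
    rw [Nat.cast_add, Nat.cast_mul, Nat.cast_one] at h3
    exact h3
  have hfin : 1 / 2 < p → ∫⁻ ω, (X ω : ℝ≥0∞) ∂P < ⊤ := by
    intro hp
    have hb : ∀ N : ℕ, ∫⁻ ω, ((min (X ω) N : ℕ) : ℝ≥0∞) ∂P ≤
        ENNReal.ofReal (p / (2 * p - 1)) := by
      intro N
      have hlt : ∫⁻ ω, ((min (X ω) N : ℕ) : ℝ≥0∞) ∂P ≠ ⊤ := by
        refine ne_top_of_le_ne_top (ENNReal.natCast_ne_top N)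
          ((lintegral_mono (g := fun _ => (N : ℝ≥0∞)) fun ω => ?_).trans (by simp))
        exact (Nat.cast_le (α := ℝ≥0∞)).2 (min_le_right _ _)
      have h := htr N
      lift ∫⁻ ω, ((min (X ω) N : ℕ) : ℝ≥0∞) ∂P to NNReal using hlt with m
      rw [← ENNReal.ofReal_coe_nnreal, ← ENNReal.ofReal_mul ha0, ← ENNReal.ofReal_one,
        ← ENNReal.ofReal_add (by positivity) zero_le_one,
        ENNReal.ofReal_le_ofReal_iff (by positivity)] at h
      rw [← ENNReal.ofReal_coe_nnreal]
      apply ENNReal.ofReal_le_ofReal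
      rw [le_div_iff₀ (by linarith)]
      rw [div_mul_eq_mul_div, ← sub_le_iff_le_add, le_div_iff₀ hp0] at h
      linarith
    have hsup : ∀ ω, (X ω : ℝ≥0∞) = ⨆ N : ℕ, ((min (X ω) N : ℕ) : ℝ≥0∞) := by
      intro ω
      apply le_antisymm
      · exact le_iSup_of_le (X ω) (by simp)
      · exact iSup_le fun N => (Nat.cast_le (α := ℝ≥0∞)).2 (min_le_left _ _)
    simp_rw [hsup]
    rw [lintegral_iSup (f := fun N ω => ((min (X ω) N : ℕ) : ℝ≥0∞))
      (fun N => (mA fun k => ((min k N : ℕ) : ℝ≥0∞)).comp hX)]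
    · exact (iSup_le hb).trans_lt ENNReal.ofReal_lt_top
    · intro N M hNM ω
      have : min (X ω) N ≤ min (X ω) M := min_le_min_left _ hNM
      exact (Nat.cast_le (α := ℝ≥0∞)).2 this
  have key : ∫⁻ ω, (X ω : ℝ≥0∞) ∂P < ⊤ → 1 / 2 < p ∧
      ∫⁻ ω, (X ω : ℝ≥0∞) ∂P = ENNReal.ofReal (p / (2 * p - 1)) := by
    intro hlt
    lift ∫⁻ ω, (X ω : ℝ≥0∞) ∂P to NNReal using hlt.ne with m
    have hm := m.coe_nonneg
    rw [← ENNReal.ofReal_coe_nnreal, ← ENNReal.ofReal_mul ha0, ← ENNReal.ofReal_one,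
      ← ENNReal.ofReal_add (by positivity) zero_le_one,
      ENNReal.ofReal_eq_ofReal_iff hm (by positivity)] at hE
    rw [div_mul_eq_mul_div, ← sub_eq_iff_eq_add, _root_.eq_div_iff hp0.ne'] at hE
    have hp : 1 / 2 < p := by
      by_contra hcon
      nlinarith [not_lt.mp hcon]
    refine ⟨hp, ?_⟩
    rw [← ENNReal.ofReal_coe_nnreal]
    congr 1
    rw [_root_.eq_div_iff (by linarith)]
    linarith
  exact ⟨⟨fun h => (key h).1, hfin⟩, fun h => (key (hfin h)).2⟩
end

section
/- Suppose A has the Bernoulli distribution with parameter 0 < p < 1, i.e., ℙ[A = 1] = p and ℙ[A = 0] = 1 − p. Then X has a geometric distribution on {1, 2, 3, …}: ℙ[X = n] = (1 − p) · p^{n−1} for every n ≥ 1, and ℙ[X = 0] = 0. -/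
open MeasureTheory ProbabilityTheory ENNReal

theorem stmt_12 {Ω : Type*} [MeasurableSpace Ω] {P : Measure Ω} [IsProbabilityMeasure P]
    {A X : Ω → ℕ} (hA : Measurable A) (hX : Measurable X)
    (hAX : IndepFun A X P)
    (h0 : 0 < P {ω | A ω = 0})
    (hfix : Measure.map X P = Measure.map (fun ω => A ω * X ω + 1) P)
    (p : ℝ) (hp0 : 0 < p) (hp1 : p < 1)
    (hber1 : P {ω | A ω = 1} = ENNReal.ofReal p)
    (hber0 : P {ω | A ω = 0} = ENNReal.ofReal (1 - p)) :
    P {ω | X ω = 0} = 0 ∧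
    ∀ n : ℕ, 1 ≤ n → P {ω | X ω = n} = ENNReal.ofReal ((1 - p) * p ^ (n - 1)) := by
  have key : ∀ n : ℕ, P {ω | X ω = n} = P {ω | A ω * X ω + 1 = n} := by
    intro n
    have h := congrArg (fun m => m {n}) hfix
    rw [Measure.map_apply hX (measurableSet_singleton n),
      Measure.map_apply (f := fun ω => A ω * X ω + 1) ((hA.mul hX).add_const 1) (measurableSet_singleton n)] at h
    exact h
  have hm0 : MeasurableSet {ω | A ω = 0} := hA (measurableSet_singleton 0)
  have hm1 : MeasurableSet {ω | A ω = 1} := hA (measurableSet_singleton 1)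
  have hae : ∀ᵐ ω ∂P, A ω = 0 ∨ A ω = 1 := by
    have hd : Disjoint {ω | A ω = 0} {ω | A ω = 1} := by
      rw [Set.disjoint_left]
      intro ω h h'
      simp only [Set.mem_ofPred_eq] at h h'
      omega
    have hu : P ({ω | A ω = 0} ∪ {ω | A ω = 1}) = 1 := by
      rw [measure_union hd hm1, hber0, hber1, ← ENNReal.ofReal_add (by linarith) hp0.le]
      simp
    have := (prob_compl_eq_zero_iff (hm0.union hm1)).2 hu
    exact this
  have hz : P {ω | X ω = 0} = 0 := by
    rw [key 0]
    simp
  have hX0 : ∀ᵐ ω ∂P, X ω ≠ 0 := by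
    rw [ae_iff]
    simpa using hz
  refine ⟨hz, ?_⟩
  intro n hn
  induction n, hn using Nat.le_induction with
  | base =>
    rw [key 1]
    have : P {ω | A ω * X ω + 1 = 1} = P {ω | A ω = 0} := by
      apply measure_congr
      filter_upwards [hX0] with ω h
      apply propext
      change A ω * X ω + 1 = 1 ↔ A ω = 0
      simp [h]
    rw [this, hber0]
    simp
  | succ n hn ih =>
    rw [key (n + 1)]
    have : P {ω | A ω * X ω + 1 = n + 1} = P (A ⁻¹' {1} ∩ X ⁻¹' {n}) := by
      apply measure_congr
      filter_upwards [hae] with ω h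
      apply propext
      change A ω * X ω + 1 = n + 1 ↔ A ω = 1 ∧ X ω = n
      rcases h with h | h
      · simp [h]; omega
      · simp [h]
    rw [this, hAX.measure_inter_preimage_eq_mul _ _ (measurableSet_singleton 1)
      (measurableSet_singleton n)]
    change P {ω | A ω = 1} * P {ω | X ω = n} = _
    rw [hber1, ih, ← ENNReal.ofReal_mul hp0.le]
    congr 1
    obtain ⟨k, rfl⟩ : ∃ k, n = k + 1 := ⟨n - 1, by omega⟩
    simp only [Nat.add_sub_cancel]
    ring
end

section
/- The probability mass function of X satisfies the recursion: ℙ[X = 0] = 0, ℙ[X = 1] = ℙ[A = 0], and for every n ≥ 2, ℙ[X = n] = ∑_{d ∣ n−1} ℙ[A = d] · ℙ[X = (n−1)/d], where the sum runs over the positive divisors d of n − 1. -/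
open MeasureTheory ProbabilityTheory ENNReal

theorem stmt_13 {Ω : Type*} [MeasurableSpace Ω] {P : Measure Ω} [IsProbabilityMeasure P]
    {A X : Ω → ℕ} (hA : Measurable A) (hX : Measurable X)
    (hAX : IndepFun A X P)
    (h0 : 0 < P {ω | A ω = 0})
    (hfix : Measure.map X P = Measure.map (fun ω => A ω * X ω + 1) P) :
    P {ω | X ω = 0} = 0 ∧
    P {ω | X ω = 1} = P {ω | A ω = 0} ∧
    ∀ n : ℕ, 2 ≤ n →
      P {ω | X ω = n} =
        ∑ d ∈ (n - 1).divisors, P {ω | A ω = d} * P {ω | X ω = (n - 1) / d} := by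
  have key : ∀ n : ℕ, P {ω | X ω = n} = P {ω | A ω * X ω + 1 = n} := by
    intro n
    have hm : Measurable (fun ω => A ω * X ω + 1) := (hA.mul hX).add_const 1
    have h := congrArg (fun m : Measure ℕ => m {n}) hfix
    simp only [Measure.map_apply hX (measurableSet_singleton n),
      Measure.map_apply hm (measurableSet_singleton n)] at h
    exact h
  have hz : P {ω | X ω = 0} = 0 := by
    rw [key 0]
    simp
  refine ⟨hz, ?_, ?_⟩
  · rw [key 1]
    apply le_antisymm
    · calc P {ω | A ω * X ω + 1 = 1} ≤ P ({ω | A ω = 0} ∪ {ω | X ω = 0}) := by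
            apply measure_mono
            intro ω hω
            simpa using hω
        _ ≤ P {ω | A ω = 0} + P {ω | X ω = 0} := measure_union_le _ _
        _ = P {ω | A ω = 0} := by rw [hz, add_zero]
    · apply measure_mono
      intro ω hω
      have h1 : A ω = 0 := hω
      simp [h1]
  · intro n hn
    rw [key n]
    have hset : {ω | A ω * X ω + 1 = n} =
        ⋃ d ∈ (n - 1).divisors, (A ⁻¹' {d} ∩ X ⁻¹' {(n - 1) / d}) := by
      ext ω
      simp only [Set.mem_setOf_eq, Set.mem_iUnion, Set.mem_inter_iff, Set.mem_preimage,
        Set.mem_singleton_iff, Nat.mem_divisors, exists_prop]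
      constructor
      · intro h
        have h1 : n - 1 = A ω * X ω := by omega
        have h2 : n - 1 ≠ 0 := by omega
        have h3 : 0 < A ω := by
          rcases Nat.eq_zero_or_pos (A ω) with h4 | h4
          · rw [h4, zero_mul] at h1
            exact absurd h1 h2
          · exact h4
        refine ⟨A ω, ⟨⟨X ω, h1⟩, h2⟩, rfl, ?_⟩
        rw [h1, Nat.mul_div_cancel_left _ h3]
      · rintro ⟨d, ⟨hd, -⟩, h1, h2⟩
        rw [h1, h2, Nat.mul_div_cancel' hd]
        omega
    rw [hset, measure_biUnion_finset]
    · refine Finset.sum_congr rfl fun d _ => ?_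
      exact hAX.measure_inter_preimage_eq_mul _ _ (measurableSet_singleton d)
        (measurableSet_singleton _)
    · intro d _ e _ hde
      refine Set.disjoint_left.mpr ?_
      rintro ω ⟨h1, _⟩ ⟨h2, _⟩
      exact hde (Eq.trans (Eq.symm h1) h2)
    · intro d _
      exact (hA (measurableSet_singleton d)).inter (hX (measurableSet_singleton _))
end

section
/- Define X := 1 + ∑_{n ≥ 1} ∏_{k=1}^{n} A_k, which is almost surely a finite natural number. Then there exists a random variable Y : Ω → ℕ such that Y is independent of A_1, Y has the same law as X, and X = A_1 · Y + 1 almost surely; in particular X satisfies the distributional fixed-point equation X =_d A_1 · X + 1 with A_1 independent of X. -/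
open MeasureTheory ProbabilityTheory ENNReal

noncomputable def auxS (a : ℕ → ℕ) : ℝ≥0∞ :=
  1 + ∑' n : ℕ, ∏ k ∈ Finset.range (n + 1), (a k : ℝ≥0∞)

noncomputable def auxG (a : ℕ → ℕ) : ℕ := ⌊(auxS a).toReal⌋₊

lemma auxS_meas : Measurable auxS := by
  unfold auxS
  refine measurable_const.add (Measurable.ennreal_tsum fun n => ?_)
  refine Finset.measurable_prod _ fun k _ => ?_
  exact (measurable_from_top (f := fun n : ℕ => (n : ℝ≥0∞))).comp (measurable_pi_apply k)

lemma auxG_meas : Measurable auxG :=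
  Nat.measurable_floor.comp auxS_meas.ennreal_toReal

lemma auxS_rec (a : ℕ → ℕ) : auxS a = 1 + a 0 * auxS (fun k => a (k + 1)) := by
  unfold auxS
  congr 1
  have h : (1 + ∑' n : ℕ, ∏ k ∈ Finset.range (n + 1), (a (k + 1) : ℝ≥0∞))
      = ∑' n : ℕ, ∏ k ∈ Finset.range n, (a (k + 1) : ℝ≥0∞) := by
    rw [tsum_eq_zero_add' (f := fun n => ∏ k ∈ Finset.range n, (a (k + 1) : ℝ≥0∞))
      ENNReal.summable]
    simp
  rw [h, ← ENNReal.tsum_mul_left]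
  refine tsum_congr fun n => ?_
  rw [Finset.prod_range_succ', mul_comm]

lemma auxS_Icc (a : ℕ → ℕ) :
    1 + ∑' n : ℕ, ∏ k ∈ Finset.Icc 1 (n + 1), (a k : ℝ≥0∞) = auxS (fun k => a (k + 1)) := by
  unfold auxS
  congr 1
  refine tsum_congr fun n => ?_
  induction n with
  | zero => simp
  | succ n ih => rw [Finset.prod_Icc_succ_top (by omega), ih, Finset.prod_range_succ _ (n + 1)]

theorem stmt_15 {Ω : Type*} [MeasurableSpace Ω] {P : Measure Ω} [IsProbabilityMeasure P]
    (A : ℕ → Ω → ℕ) (hA : ∀ n, Measurable (A n))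
    (hindep : iIndepFun A P)
    (hident : ∀ n, Measure.map (A n) P = Measure.map (A 1) P)
    (h0 : 0 < P {ω | A 1 ω = 0})
    (X : Ω → ℕ) (hXmeas : Measurable X)
    (hXdef : ∀ᵐ ω ∂P, (X ω : ℝ≥0∞) =
      1 + ∑' n : ℕ, ∏ k ∈ Finset.Icc 1 (n + 1), (A k ω : ℝ≥0∞)) :
    (∀ᵐ ω ∂P,
      (1 + ∑' n : ℕ, ∏ k ∈ Finset.Icc 1 (n + 1), (A k ω : ℝ≥0∞)) < ⊤) ∧
    ∃ Y : Ω → ℕ, Measurable Y ∧ IndepFun (A 1) Y P ∧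
      Measure.map Y P = Measure.map X P ∧
      (∀ᵐ ω ∂P, X ω = A 1 ω * Y ω + 1) ∧
      Measure.map X P = Measure.map (fun ω => A 1 ω * Y ω + 1) P := by
  refine ⟨hXdef.mono fun ω h => h ▸ ENNReal.natCast_lt_top _, ?_⟩
  have hm : ∀ j, Measurable (fun ω k => A (k + j) ω) := fun j =>
    measurable_pi_iff.2 fun k => hA _
  have hlaw : ∀ j, P.map (fun ω k => A (k + j) ω)
      = Measure.infinitePi (fun _ : ℕ => P.map (A 1)) := by
    intro j
    have h := (hindep.precomp (add_left_injective j)).map_fun_eq_infinitePi_map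
      (fun i => hA _)
    rw [h]
    congr 1
    funext k
    exact hident _
  have hX1 : ∀ᵐ ω ∂P, (X ω : ℝ≥0∞) = auxS (fun k => A (k + 1) ω) :=
    hXdef.mono fun ω h => h.trans (auxS_Icc (fun k => A k ω))
  have hXG : X =ᵐ[P] fun ω => auxG (fun k => A (k + 1) ω) :=
    hX1.mono fun ω h => by simp [auxG, ← h]
  have hset : MeasurableSet {a : ℕ → ℕ | (auxG a : ℝ≥0∞) = auxS a} :=
    measurableSet_eq_fun
      ((measurable_from_top (f := fun n : ℕ => (n : ℝ≥0∞))).comp auxG_meas) auxS_meas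
  have hG1 : ∀ᵐ ω ∂P, (auxG (fun k => A (k + 1) ω) : ℝ≥0∞) = auxS (fun k => A (k + 1) ω) := by
    filter_upwards [hX1, hXG] with ω h1 h2
    rw [← h2, h1]
  have hG2 : ∀ᵐ ω ∂P, (auxG (fun k => A (k + 2) ω) : ℝ≥0∞) = auxS (fun k => A (k + 2) ω) := by
    have h := (ae_map_iff (hm 1).aemeasurable hset).2 hG1
    rw [hlaw 1, ← hlaw 2] at h
    exact (ae_map_iff (hm 2).aemeasurable hset).1 h
  have hfin : ∀ᵐ ω ∂P, X ω = A 1 ω * auxG (fun k => A (k + 2) ω) + 1 := by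
    filter_upwards [hX1, hG2] with ω h1 h2
    rw [auxS_rec] at h1
    have h3 : (X ω : ℝ≥0∞) = 1 + A 1 ω * auxS (fun k => A (k + 2) ω) := h1
    rw [← h2] at h3
    have h4 : X ω = 1 + A 1 ω * auxG (fun k => A (k + 2) ω) := by exact_mod_cast h3
    rw [h4, add_comm]
  refine ⟨fun ω => auxG (fun k => A (k + 2) ω), auxG_meas.comp (hm 2), ?_, ?_, hfin,
    Measure.map_congr hfin⟩
  · have hI := indep_iSup_of_disjoint (fun i => (hA i).comap_le)
      ((iIndepFun_iff_iIndep _ _ _).1 hindep) (S := {1}) (T := Set.Ici 2) (by simp)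
    have hI2 : IndepFun (A 1) (fun ω k => A (k + 2) ω) P := by
      rw [IndepFun_iff_Indep]
      refine indep_of_indep_of_le_left (indep_of_indep_of_le_right hI ?_) ?_
      · rw [← measurable_iff_comap_le]
        refine @measurable_pi_lambda _ _ _ (_) _ _ fun k => ?_
        rw [measurable_iff_comap_le]
        exact le_iSup₂_of_le (k + 2) (by simp) le_rfl
      · exact le_iSup₂_of_le 1 (by simp) le_rfl
    exact hI2.comp measurable_id auxG_meas
  · rw [Measure.map_congr hXG]
    have e : ∀ j, P.map (fun ω => auxG (fun k => A (k + j) ω))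
        = (P.map (fun ω k => A (k + j) ω)).map auxG := fun j =>
      (Measure.map_map auxG_meas (hm j)).symm
    rw [e 1, e 2, hlaw, hlaw]
end

section
/- Suppose A has the Poisson distribution with parameter λ, where 0 < λ < 1, i.e., ℙ[A = k] = e^{−λ} λ^k / k! for k ∈ ℕ. Then E[X] is finite and the parameter is recovered from the first moment by λ = 1 − 1/E[X]. -/
open MeasureTheory ProbabilityTheory ENNReal

theorem mean_aux {Ω : Type*} [MeasurableSpace Ω] {P : Measure Ω} [IsProbabilityMeasure P]
    {A : Ω → ℕ} (hA : Measurable A) (lam : ℝ) (hlam0 : 0 < lam)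
    (hpois : ∀ k : ℕ, P {ω | A ω = k} =
      ENNReal.ofReal (Real.exp (-lam) * lam ^ k / (Nat.factorial k))) :
    ∫⁻ ω, (A ω : ℝ≥0∞) ∂P = ENNReal.ofReal lam := by
  have hm : ∀ k : ℕ, Measure.map A P {k} =
      ENNReal.ofReal (Real.exp (-lam) * lam ^ k / (Nat.factorial k)) := by
    intro k
    rw [Measure.map_apply hA (measurableSet_singleton k), ← hpois k]
    rfl
  have h1 : ∑' k : ℕ, Measure.map A P {k} = 1 := by
    have := lintegral_countable' (μ := Measure.map A P) (fun _ : ℕ => (1 : ℝ≥0∞))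
    simp only [one_mul] at this
    rw [← this, lintegral_map measurable_const hA]
    simp
  have h2 : ∫⁻ ω, (A ω : ℝ≥0∞) ∂P = ∫⁻ k, (k : ℝ≥0∞) ∂(Measure.map A P) :=
    (lintegral_map (measurable_of_countable (fun k : ℕ => (k : ℝ≥0∞))) hA).symm
  rw [h2, lintegral_countable', tsum_eq_zero_add' ENNReal.summable]
  have h3 : ∀ k : ℕ, ((k + 1 : ℕ) : ℝ≥0∞) * Measure.map A P {k + 1} =
      ENNReal.ofReal lam * Measure.map A P {k} := by
    intro k
    rw [hm, hm, ← ENNReal.ofReal_natCast, ← ENNReal.ofReal_mul (by positivity),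
      ← ENNReal.ofReal_mul hlam0.le, Nat.factorial_succ]
    congr 1
    push_cast
    field_simp
    ring
  simp only [h3]
  rw [ENNReal.tsum_mul_left, h1]
  simp

theorem stmt_17 {Ω : Type*} [MeasurableSpace Ω] {P : Measure Ω} [IsProbabilityMeasure P]
    {A X : Ω → ℕ} (hA : Measurable A) (hX : Measurable X)
    (hAX : IndepFun A X P)
    (h0 : 0 < P {ω | A ω = 0})
    (hfix : Measure.map X P = Measure.map (fun ω => A ω * X ω + 1) P)
    (lam : ℝ) (hlam0 : 0 < lam) (hlam1 : lam < 1)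
    (hpois : ∀ k : ℕ, P {ω | A ω = k} =
      ENNReal.ofReal (Real.exp (-lam) * lam ^ k / (Nat.factorial k))) :
    (∫⁻ ω, (X ω : ℝ≥0∞) ∂P) < ⊤ ∧
    lam = 1 - 1 / (∫⁻ ω, (X ω : ℝ≥0∞) ∂P).toReal := by
  have hmean := mean_aux hA lam hlam0 hpois
  have hmeas : ∀ f : ℕ → ℝ≥0∞, Measurable f := fun f => measurable_of_countable f
  have hT : Measurable (fun ω => A ω * X ω + 1) := (hA.mul hX).add_const 1
  have hf : ∀ f : ℕ → ℝ≥0∞, ∫⁻ ω, f (X ω) ∂P = ∫⁻ ω, f (A ω * X ω + 1) ∂P := by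
    intro f
    rw [← lintegral_map (hmeas f) hX, hfix, lintegral_map (hmeas f) hT]
  have hprod : ∀ f : ℕ → ℝ≥0∞, ∫⁻ ω, ((A ω : ℝ≥0∞) * f (X ω) + 1) ∂P =
      ENNReal.ofReal lam * ∫⁻ ω, f (X ω) ∂P + 1 := by
    intro f
    rw [lintegral_add_right _ measurable_const, ← hmean]
    have := lintegral_mul_eq_lintegral_mul_lintegral_of_indepFun
      ((hmeas (fun k => (k : ℝ≥0∞))).comp hA) ((hmeas f).comp hX)
      (hAX.comp (hmeas (fun k => (k : ℝ≥0∞))) (hmeas f))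
    simp only [Pi.mul_apply, Function.comp_apply] at this
    rw [← this]
    simp
  have hbound : ∀ M : ℕ, ∫⁻ ω, ((min (X ω) M : ℕ) : ℝ≥0∞) ∂P ≤ ENNReal.ofReal (1 / (1 - lam)) := by
    intro M
    have hfin : ∫⁻ ω, ((min (X ω) M : ℕ) : ℝ≥0∞) ∂P ≠ ⊤ := by
      have : ∫⁻ ω, ((min (X ω) M : ℕ) : ℝ≥0∞) ∂P ≤ ∫⁻ ω, (M : ℝ≥0∞) ∂P :=
        lintegral_mono fun ω => Nat.cast_le.2 (min_le_right _ _)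
      refine ne_top_of_le_ne_top ?_ this
      simp
    have hle : ∫⁻ ω, ((min (X ω) M : ℕ) : ℝ≥0∞) ∂P ≤
        ENNReal.ofReal lam * ∫⁻ ω, ((min (X ω) M : ℕ) : ℝ≥0∞) ∂P + 1 := by
      rw [← hprod (fun k => ((min k M : ℕ) : ℝ≥0∞)), hf (fun k => ((min k M : ℕ) : ℝ≥0∞))]
      refine lintegral_mono fun ω => ?_
      have : min (A ω * X ω + 1) M ≤ A ω * min (X ω) M + 1 := by
        rcases Nat.eq_zero_or_pos (A ω) with h | h
        · simp [h]
        · rcases le_total (X ω) M with h' | h'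
          · rw [min_eq_left h']; exact min_le_left _ _
          · rw [min_eq_right h']
            exact (min_le_right _ _).trans (by nlinarith)
      show ((min (A ω * X ω + 1) M : ℕ) : ℝ≥0∞) ≤ (A ω : ℝ≥0∞) * ((min (X ω) M : ℕ) : ℝ≥0∞) + 1
      exact_mod_cast this
    generalize ∫⁻ ω, ((min (X ω) M : ℕ) : ℝ≥0∞) ∂P = g at hfin hle
    rw [ENNReal.le_ofReal_iff_toReal_le hfin (by have := sub_pos.2 hlam1; positivity)]
    have h := ENNReal.toReal_mono (by finiteness) hle
    rw [ENNReal.toReal_add (by finiteness) (by simp), ENNReal.toReal_mul,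
      ENNReal.toReal_ofReal hlam0.le, ENNReal.toReal_one] at h
    rw [le_div_iff₀ (sub_pos.2 hlam1)]
    linarith
  have hsup : ∫⁻ ω, (X ω : ℝ≥0∞) ∂P = ⨆ M : ℕ, ∫⁻ ω, ((min (X ω) M : ℕ) : ℝ≥0∞) ∂P := by
    rw [← lintegral_iSup (f := fun (M : ℕ) ω => ((min (X ω) M : ℕ) : ℝ≥0∞)) (fun M => (hmeas (fun k => ((min k M : ℕ) : ℝ≥0∞))).comp hX)]
    · refine lintegral_congr fun ω => le_antisymm ?_ ?_
      · refine le_iSup_of_le (X ω) ?_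
        simp
      · exact iSup_le fun M => Nat.cast_le.2 (min_le_left _ _)
    · intro M N hMN ω
      show ((min (X ω) M : ℕ) : ℝ≥0∞) ≤ ((min (X ω) N : ℕ) : ℝ≥0∞)
      exact Nat.cast_le.2 (min_le_min_left _ hMN)
  have hlt : ∫⁻ ω, (X ω : ℝ≥0∞) ∂P < ⊤ := by
    rw [hsup]
    exact (iSup_le hbound).trans_lt ENNReal.ofReal_lt_top
  refine ⟨hlt, ?_⟩
  have heq : ∫⁻ ω, (X ω : ℝ≥0∞) ∂P = ENNReal.ofReal lam * ∫⁻ ω, (X ω : ℝ≥0∞) ∂P + 1 := by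
    rw [← hprod (fun k => (k : ℝ≥0∞))]
    refine (hf (fun k => (k : ℝ≥0∞))).trans (lintegral_congr fun ω => ?_)
    push_cast
    rfl
  generalize ∫⁻ ω, (X ω : ℝ≥0∞) ∂P = g at hlt heq
  have hg := hlt.ne
  have h := congrArg ENNReal.toReal heq
  rw [ENNReal.toReal_add (by finiteness) (by simp), ENNReal.toReal_mul,
    ENNReal.toReal_ofReal hlam0.le, ENNReal.toReal_one] at h
  have hne : g.toReal ≠ 0 := by
    intro h'
    rw [h'] at h
    simp at h
  field_simp
  linarith
end

section
/- Suppose A has the geometric distribution with parameter p, where 1/2 < p < 1, i.e., ℙ[A = k] = (1−p)^k · p for k ∈ ℕ. Then E[X] is finite and the parameter is recovered from the first moment by p = E[X] / (2·E[X] − 1). -/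
open MeasureTheory ProbabilityTheory ENNReal

theorem stmt_18 {Ω : Type*} [MeasurableSpace Ω] {P : Measure Ω} [IsProbabilityMeasure P]
    {A X : Ω → ℕ} (hA : Measurable A) (hX : Measurable X)
    (hAX : IndepFun A X P)
    (h0 : 0 < P {ω | A ω = 0})
    (hfix : Measure.map X P = Measure.map (fun ω => A ω * X ω + 1) P)
    (p : ℝ) (hp0 : 1 / 2 < p) (hp1 : p < 1)
    (hgeo : ∀ k : ℕ, P {ω | A ω = k} = ENNReal.ofReal ((1 - p) ^ k * p)) :
    (∫⁻ ω, (X ω : ℝ≥0∞) ∂P) < ⊤ ∧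
    p = (∫⁻ ω, (X ω : ℝ≥0∞) ∂P).toReal /
        (2 * (∫⁻ ω, (X ω : ℝ≥0∞) ∂P).toReal - 1) := by
  have hmeas : ∀ f : ℕ → ℝ≥0∞, Measurable f := fun f => measurable_from_nat
  have hAX1 : Measurable (fun ω => A ω * X ω + 1) := (hA.mul hX).add_const 1
  have hEq : ∀ f : ℕ → ℝ≥0∞, ∫⁻ ω, f (X ω) ∂P = ∫⁻ ω, f (A ω * X ω + 1) ∂P := by
    intro f
    rw [← lintegral_map (hmeas f) hX, hfix, lintegral_map (hmeas f) hAX1]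
  have hEA : ∫⁻ ω, (A ω : ℝ≥0∞) ∂P = ENNReal.ofReal ((1 - p) / p) := by
    rw [← lintegral_map (f := fun n : ℕ => (n : ℝ≥0∞)) (hmeas _) hA, lintegral_countable']
    have hr : ‖1 - p‖ < 1 := by rw [Real.norm_eq_abs, abs_lt]; constructor <;> linarith
    have hs := (hasSum_coe_mul_geometric_of_norm_lt_one hr).mul_right p
    have h1 : ∀ k : ℕ, (k : ℝ≥0∞) * (Measure.map A P) {k}
        = ENNReal.ofReal ((k : ℝ) * (1 - p) ^ k * p) := by
      intro k
      rw [Measure.map_apply hA (measurableSet_singleton k)]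
      have : A ⁻¹' {k} = {ω | A ω = k} := rfl
      rw [this, hgeo, mul_assoc, ENNReal.ofReal_mul (Nat.cast_nonneg k), ENNReal.ofReal_natCast]
    simp_rw [h1]
    rw [← ENNReal.ofReal_tsum_of_nonneg _ hs.summable, hs.tsum_eq]
    · congr 1
      have : p ≠ 0 := by linarith
      rw [_root_.sub_sub_cancel]
      field_simp
    · intro k
      have : 0 ≤ 1 - p := by linarith
      have : 0 ≤ p := by linarith
      positivity
  have hMul : ∀ f : ℕ → ℝ≥0∞, ∫⁻ ω, (A ω : ℝ≥0∞) * f (X ω) ∂P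
      = ENNReal.ofReal ((1 - p) / p) * ∫⁻ ω, f (X ω) ∂P := by
    intro f
    rw [← hEA]
    exact lintegral_mul_eq_lintegral_mul_lintegral_of_indepFun
      ((hmeas (fun n : ℕ => (n : ℝ≥0∞))).comp hA) ((hmeas f).comp hX)
      (hAX.comp (hmeas (fun n : ℕ => (n : ℝ≥0∞))) (hmeas f))
  have hp : 0 < p := by linarith
  have ha : 0 ≤ (1 - p) / p := div_nonneg (by linarith) hp.le
  have hb : 0 < 2 * p - 1 := by linarith
  have hbd : ∀ M : ℕ, ∫⁻ ω, ((min (X ω) M : ℕ) : ℝ≥0∞) ∂P ≤ ENNReal.ofReal (p / (2 * p - 1)) := by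
    intro M
    have hfin : ∫⁻ ω, ((min (X ω) M : ℕ) : ℝ≥0∞) ∂P ≠ ⊤ := by
      refine ne_top_of_le_ne_top (ENNReal.natCast_ne_top M) ?_
      calc _ ≤ ∫⁻ ω, (M : ℝ≥0∞) ∂P := lintegral_mono fun ω => by
            exact Nat.cast_le.mpr (min_le_right _ _)
        _ = M := by simp
    have hle : ∫⁻ ω, ((min (X ω) M : ℕ) : ℝ≥0∞) ∂P ≤
        ENNReal.ofReal ((1 - p) / p) * ∫⁻ ω, ((min (X ω) M : ℕ) : ℝ≥0∞) ∂P + 1 := by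
      calc _ = ∫⁻ ω, ((min (A ω * X ω + 1) M : ℕ) : ℝ≥0∞) ∂P :=
            hEq (fun n => ((min n M : ℕ) : ℝ≥0∞))
        _ ≤ ∫⁻ ω, ((A ω : ℝ≥0∞) * ((min (X ω) M : ℕ) : ℝ≥0∞) + 1) ∂P := by
            refine lintegral_mono fun ω => ?_
            have : min (A ω * X ω + 1) M ≤ A ω * min (X ω) M + 1 := by
              rcases Nat.eq_zero_or_pos (A ω) with h | h
              · simp [h]
              · rcases le_total (X ω) M with h' | h'
                · rw [min_eq_left h']; exact min_le_left _ _
                · rw [min_eq_right h']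
                  exact (min_le_right _ _).trans (by nlinarith)
            have h := (Nat.cast_le (α := ℝ≥0∞)).mpr this
            rwa [Nat.cast_add, Nat.cast_mul, Nat.cast_one] at h
        _ = _ := by
            rw [lintegral_add_right _ measurable_const,
              hMul (fun n => ((min n M : ℕ) : ℝ≥0∞))]
            simp
    generalize ∫⁻ ω, ((min (X ω) M : ℕ) : ℝ≥0∞) ∂P = m at hfin hle
    have h2 := ENNReal.toReal_mono (by finiteness) hle
    rw [ENNReal.toReal_add (by finiteness) (by finiteness), ENNReal.toReal_mul,
      ENNReal.toReal_ofReal ha, ENNReal.toReal_one] at h2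
    rw [← ENNReal.ofReal_toReal hfin]
    apply ENNReal.ofReal_le_ofReal
    rw [le_div_iff₀ hb]
    have h3 := mul_le_mul_of_nonneg_left h2 hp.le
    have h4 : p * ((1 - p) / p * m.toReal + 1) = (1 - p) * m.toReal + p := by field_simp
    rw [h4] at h3
    linarith
  have hsup : ∫⁻ ω, (X ω : ℝ≥0∞) ∂P ≤ ENNReal.ofReal (p / (2 * p - 1)) := by
    have : ∀ ω, (X ω : ℝ≥0∞) = ⨆ M : ℕ, ((min (X ω) M : ℕ) : ℝ≥0∞) := by
      intro ω
      apply le_antisymm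
      · exact le_iSup_of_le (X ω) (by simp)
      · exact iSup_le fun M => Nat.cast_le.mpr (min_le_left _ _)
    simp_rw [this]
    rw [lintegral_iSup (f := fun M ω => ((min (X ω) M : ℕ) : ℝ≥0∞)) (fun M => (hmeas (fun n => ((min n M : ℕ) : ℝ≥0∞))).comp hX)]
    · exact iSup_le hbd
    · intro M N h ω
      have : min (X ω) M ≤ min (X ω) N := min_le_min_left _ h
      exact Nat.cast_le.mpr this
  have hlt := hsup.trans_lt ENNReal.ofReal_lt_top
  refine ⟨hlt, ?_⟩
  have hE : ∫⁻ ω, (X ω : ℝ≥0∞) ∂P =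
      ENNReal.ofReal ((1 - p) / p) * ∫⁻ ω, (X ω : ℝ≥0∞) ∂P + 1 := by
    calc _ = ∫⁻ ω, ((A ω * X ω + 1 : ℕ) : ℝ≥0∞) ∂P := hEq (fun n => (n : ℝ≥0∞))
      _ = ∫⁻ ω, ((A ω : ℝ≥0∞) * (X ω : ℝ≥0∞) + 1) ∂P := by push_cast; rfl
      _ = _ := by
        rw [lintegral_add_right _ measurable_const, hMul (fun n => (n : ℝ≥0∞))]
        simp
  generalize ∫⁻ ω, (X ω : ℝ≥0∞) ∂P = m at hlt hE
  have hfin := hlt.ne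
  have h2 := congrArg ENNReal.toReal hE
  rw [ENNReal.toReal_add (by finiteness) (by finiteness), ENNReal.toReal_mul,
    ENNReal.toReal_ofReal ha, ENNReal.toReal_one] at h2
  have h3 : m.toReal * (2 * p - 1) = p := by
    field_simp at h2
    linarith
  have h4 : m.toReal = p / (2 * p - 1) := by rw [eq_div_iff hb.ne']; exact h3
  have h5 : 2 * m.toReal - 1 = 1 / (2 * p - 1) := by
    rw [h4]; field_simp; ring
  rw [h5, h4, div_div_div_cancel_right₀ hb.ne', div_one]
end
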